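/- arXiv:2012.01492 — 2 statements merged into one kernel-verified Lean document; each statement's English description precedes it below -/
import Mathlib

section
/- For all constants K ≥ 1 and c > 0 there exist constants C > 0 and δ > 0 with the following property. Let 𝐝 = (d_1,…,d_n) be a degree sequence with even sum M and maximum entry Δ satisfying Δ² ≤ δM; let H₁, H₂ be edge-disjoint graphs on [n] with 𝐝^{H₁} ⪯ 𝐝 and Δ_{H₂} ≤ KΔ; set 𝐝̃ = 𝐝 − 𝐝^{H₁}, M̃ = Σ_i d̃_i, M̃₂ = Σ_i d̃_i(d̃_i−1), and assume M̃ ≥ cM; let u ≠ v with uv ∉ H₁ ∪ H₂. Let G' be chosen uniformly at random from the (assumed nonempty) set 𝒢⁻ of graphs with degree sequence 𝐝 that contain H₁ and contain neither the edge uv nor any edge of H₂. Let Y₁ be the number of ordered pairs (x,y) such that xu and yv are edges of G' not in H₁ and xy is an edge of G' ∪ H₂, and let Y₂ be the number of vertices x such that both xu and xv are edges of G' not in H₁. Then |E Y₁ − (d̃_u d̃_v M̃₂²/M̃³ + Σ_{(x,y)∈𝒲} d̃_x d̃_y d̃_u d̃_v/M̃²)| ≤ C·d̃_u d̃_v·Δ⁵n/M³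 and |E Y₂ − d̃_u d̃_v M̃₂/M̃²| ≤ C·d̃_u d̃_v·Δ³/M², where 𝒲 is the set of ordered pairs (x,y) with xy ∈ H₁ ∪ H₂, xu ∉ H₁ ∪ H₂, yv ∉ H₁ ∪ H₂, and {x,y} ∩ {u,v} = ∅. -/
open Filter

noncomputable section

/-- The degree of the vertex `v` in the simple graph `G`. -/
def deg {n : ℕ} (G : SimpleGraph (Fin n)) (v : Fin n) : ℕ := (G.neighborSet v).ncard

/-- The number of edges of `G`. -/
def nedges {n : ℕ} (G : SimpleGraph (Fin n)) : ℕ := G.edgeSet.ncard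

/-- The maximum degree of `G`. -/
def maxDeg {n : ℕ} (G : SimpleGraph (Fin n)) : ℕ := Finset.univ.sup (deg G)

/-- The expectation of `X` for a graph chosen uniformly at random among all simple graphs
on `[n]` satisfying `base`. -/
def expect {n : ℕ} (base : SimpleGraph (Fin n) → Prop) (X : SimpleGraph (Fin n) → ℝ) : ℝ :=
  (∑ᶠ G ∈ {G : SimpleGraph (Fin n) | base G}, X G) /
    (Nat.card {G : SimpleGraph (Fin n) // base G} : ℝ)

/-- `Y₁`: the number of ordered pairs `(x,y)` such that `xu` and `yv` are edges of `G'`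
not in `H₁` and `xy` is an edge of `G' ∪ H₂`. -/
def Y1 {n : ℕ} (H₁ H₂ : SimpleGraph (Fin n)) (u v : Fin n) (G : SimpleGraph (Fin n)) : ℕ :=
  Nat.card {p : Fin n × Fin n // G.Adj p.1 u ∧ ¬ H₁.Adj p.1 u ∧
    G.Adj p.2 v ∧ ¬ H₁.Adj p.2 v ∧ (G ⊔ H₂).Adj p.1 p.2}

/-- `Y₂`: the number of vertices `x` such that both `xu` and `xv` are edges of `G'`
not in `H₁`. -/
def Y2 {n : ℕ} (H₁ : SimpleGraph (Fin n)) (u v : Fin n) (G : SimpleGraph (Fin n)) : ℕ :=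
  Nat.card {x : Fin n // G.Adj x u ∧ ¬ H₁.Adj x u ∧ G.Adj x v ∧ ¬ H₁.Adj x v}

/-- The degree of a vertex as the cardinality of a filter. -/
theorem deg_eq_card {n : ℕ} (G : SimpleGraph (Fin n)) (v : Fin n) [DecidablePred (G.Adj v)] :
    deg G v = (Finset.univ.filter fun w => G.Adj v w).card := by
  classical
  rw [deg, Set.ncard_eq_toFinset_card']
  congr 1
  ext w
  simp

theorem deg_mono {n : ℕ} {G H : SimpleGraph (Fin n)} (h : H ≤ G) (v : Fin n) :
    deg H v ≤ deg G v := by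
  classical
  rw [deg_eq_card, deg_eq_card]
  exact Finset.card_le_card fun w hw => by
    simp only [Finset.mem_filter, Finset.mem_univ, true_and] at hw ⊢
    exact h hw

theorem deg_sdiff {n : ℕ} {G H : SimpleGraph (Fin n)} (h : H ≤ G) (v : Fin n) :
    deg (G \ H) v = deg G v - deg H v := by
  classical
  rw [deg_eq_card, deg_eq_card, deg_eq_card, ← Finset.card_sdiff_of_subset]
  · congr 1
    ext w
    simp
  · intro w hw
    simp only [Finset.mem_filter, Finset.mem_univ, true_and] at hw ⊢
    exact h hw

theorem deg_sup_le {n : ℕ} (G H : SimpleGraph (Fin n)) (v : Fin n) :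
    deg (G ⊔ H) v ≤ deg G v + deg H v := by
  classical
  rw [deg_eq_card, deg_eq_card, deg_eq_card]
  refine le_trans (Finset.card_le_card ?_) (Finset.card_union_le _ _)
  intro w
  simp

theorem deg_sup_edge {n : ℕ} (G : SimpleGraph (Fin n)) {a b : Fin n} (hab : a ≠ b)
    (hG : ¬ G.Adj a b) (i : Fin n) :
    deg (G ⊔ SimpleGraph.edge a b) i =
      deg G i + ((if i = a then 1 else 0) + (if i = b then 1 else 0)) := by
  classical
  rw [deg_eq_card, deg_eq_card]
  by_cases hia : i = a
  · subst hia
    have : (Finset.univ.filter fun w => (G ⊔ SimpleGraph.edge i b).Adj i w)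
        = insert b (Finset.univ.filter fun w => G.Adj i w) := by
      ext w
      simp only [SimpleGraph.sup_adj, SimpleGraph.edge_adj, Finset.mem_filter, Finset.mem_univ,
        true_and, Finset.mem_insert]
      grind
    rw [this, Finset.card_insert_of_notMem (by simpa using hG)]
    simp [hab]
  · by_cases hib : i = b
    · subst hib
      have : (Finset.univ.filter fun w => (G ⊔ SimpleGraph.edge a i).Adj i w)
          = insert a (Finset.univ.filter fun w => G.Adj i w) := by
        ext w
        simp only [SimpleGraph.sup_adj, SimpleGraph.edge_adj, Finset.mem_filter, Finset.mem_univ,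
          true_and, Finset.mem_insert]
        grind
      rw [this, Finset.card_insert_of_notMem (by simpa using fun h => hG (G.adj_symm h))]
      simp [hia]
    · simp only [hia, hib, if_false, add_zero]
      congr 1
      ext w
      simp only [SimpleGraph.sup_adj, SimpleGraph.edge_adj, Finset.mem_filter, Finset.mem_univ,
        true_and]
      grind

/-- The switching that replaces the edges `ab`, `xy` by `ax`, `by`. -/
def switch {n : ℕ} (a b x y : Fin n) (G : SimpleGraph (Fin n)) : SimpleGraph (Fin n) :=
  (G \ (SimpleGraph.edge a b ⊔ SimpleGraph.edge x y)) ⊔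
    (SimpleGraph.edge a x ⊔ SimpleGraph.edge b y)

theorem switch_adj {n : ℕ} (a b x y : Fin n) (G : SimpleGraph (Fin n)) (p q : Fin n) :
    (switch a b x y G).Adj p q ↔
      (G.Adj p q ∧ ¬ (((p = a ∧ q = b) ∨ (p = b ∧ q = a)) ∧ p ≠ q) ∧
          ¬ (((p = x ∧ q = y) ∨ (p = y ∧ q = x)) ∧ p ≠ q)) ∨
        ((((p = a ∧ q = x) ∨ (p = x ∧ q = a)) ∧ p ≠ q) ∨
          (((p = b ∧ q = y) ∨ (p = y ∧ q = b)) ∧ p ≠ q)) := by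
  simp only [switch, SimpleGraph.sup_adj, SimpleGraph.sdiff_adj, SimpleGraph.edge_adj, not_or]

theorem switch_switch {n : ℕ} {a b x y : Fin n} {G : SimpleGraph (Fin n)}
    (h1 : G.Adj a b) (h2 : G.Adj x y) (h3 : ¬ G.Adj a x) (h4 : ¬ G.Adj b y) :
    switch a x b y (switch a b x y G) = G := by
  ext p q
  rw [switch_adj, switch_adj]
  have := h1.symm
  have := h2.symm
  have := fun h => h3 (G.adj_symm h)
  have := fun h => h4 (G.adj_symm h)
  grind [SimpleGraph.Adj.ne]

theorem deg_switch {n : ℕ} {a b x y : Fin n} {G : SimpleGraph (Fin n)}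
    (h1 : G.Adj a b) (h2 : G.Adj x y) (h3 : ¬ G.Adj a x) (h4 : ¬ G.Adj b y)
    (hax : a ≠ x) (hby : b ≠ y) (i : Fin n) :
    deg (switch a b x y G) i = deg G i := by
  have hay : a ≠ y := by rintro rfl; exact h4 h1.symm
  have hbx : b ≠ x := by rintro rfl; exact h3 h1
  set A := G \ (SimpleGraph.edge a b ⊔ SimpleGraph.edge x y) with hA
  have hG : G = (A ⊔ SimpleGraph.edge a b) ⊔ SimpleGraph.edge x y := by
    ext p q
    simp only [hA, SimpleGraph.sup_adj, SimpleGraph.sdiff_adj, SimpleGraph.edge_adj]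
    have := h1.symm
    have := h2.symm
    grind [SimpleGraph.Adj.ne]
  have hs : switch a b x y G = (A ⊔ SimpleGraph.edge a x) ⊔ SimpleGraph.edge b y := by
    rw [switch, sup_assoc]
  have hA' : ∀ p q, A.Adj p q → G.Adj p q := fun p q h => h.1
  rw [hs, deg_sup_edge _ hby, deg_sup_edge _ hax]
  · conv_rhs => rw [hG]
    rw [deg_sup_edge _ h2.ne, deg_sup_edge _ h1.ne]
    · ring
    · simp only [hA, SimpleGraph.sup_adj, SimpleGraph.sdiff_adj, SimpleGraph.edge_adj]
      grind [SimpleGraph.Adj.ne]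
    · simp only [hA, SimpleGraph.sup_adj, SimpleGraph.sdiff_adj, SimpleGraph.edge_adj]
      grind [SimpleGraph.Adj.ne]
  · exact fun h => h3 (hA' _ _ h)
  · simp only [SimpleGraph.sup_adj, SimpleGraph.edge_adj]
    have : ¬ A.Adj b y := fun h => h4 (hA' _ _ h)
    grind [SimpleGraph.Adj.ne]

open Classical in
/-- The graphs with degree sequence `d` that contain `H` and share no edge with `F`. -/
def graphsWith {n : ℕ} (d : Fin n → ℕ) (H F : SimpleGraph (Fin n)) :
    Finset (SimpleGraph (Fin n)) :=
  Finset.univ.filter fun G => (∀ i, deg G i = d i) ∧ (∀ p q, H.Adj p q → G.Adj p q) ∧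
    ∀ p q, G.Adj p q → ¬ F.Adj p q

theorem mem_graphsWith {n : ℕ} {d : Fin n → ℕ} {H F G : SimpleGraph (Fin n)} :
    G ∈ graphsWith d H F ↔ (∀ i, deg G i = d i) ∧ (∀ p q, H.Adj p q → G.Adj p q) ∧
      ∀ p q, G.Adj p q → ¬ F.Adj p q := by
  simp [graphsWith]

theorem mem_graphsWith_sup_edge {n : ℕ} {d : Fin n → ℕ} {H F G : SimpleGraph (Fin n)}
    {a b : Fin n} (hab : a ≠ b) :
    G ∈ graphsWith d (H ⊔ SimpleGraph.edge a b) F ↔ G ∈ graphsWith d H F ∧ G.Adj a b := by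
  simp only [mem_graphsWith, SimpleGraph.sup_adj, SimpleGraph.edge_adj]
  constructor
  · rintro ⟨h1, h2, h3⟩
    exact ⟨⟨h1, fun p q h => h2 p q (Or.inl h), h3⟩, h2 a b (Or.inr ⟨Or.inl ⟨rfl, rfl⟩, hab⟩)⟩
  · rintro ⟨⟨h1, h2, h3⟩, h4⟩
    refine ⟨h1, fun p q h => ?_, h3⟩
    have := h4.symm
    grind

theorem mem_graphsWith_avoid_edge {n : ℕ} {d : Fin n → ℕ} {H F G : SimpleGraph (Fin n)}
    {a b : Fin n} (hab : a ≠ b) :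
    G ∈ graphsWith d H (F ⊔ SimpleGraph.edge a b) ↔ G ∈ graphsWith d H F ∧ ¬ G.Adj a b := by
  simp only [mem_graphsWith, SimpleGraph.sup_adj, SimpleGraph.edge_adj]
  constructor
  · rintro ⟨h1, h2, h3⟩
    exact ⟨⟨h1, h2, fun p q h h' => h3 p q h (Or.inl h')⟩,
      fun h => h3 a b h (Or.inr ⟨Or.inl ⟨rfl, rfl⟩, hab⟩)⟩
  · rintro ⟨⟨h1, h2, h3⟩, h4⟩
    refine ⟨h1, h2, fun p q h => ?_⟩
    have := h.symm
    have := h3 p q h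
    grind

theorem card_graphsWith_add {n : ℕ} (d : Fin n → ℕ) (H F : SimpleGraph (Fin n))
    {a b : Fin n} (hab : a ≠ b) :
    (graphsWith d (H ⊔ SimpleGraph.edge a b) F).card +
      (graphsWith d H (F ⊔ SimpleGraph.edge a b)).card = (graphsWith d H F).card := by
  classical
  rw [← Finset.card_filter_add_card_filter_not (s := graphsWith d H F) (fun G => G.Adj a b)]
  congr 2
  · ext G
    rw [mem_graphsWith_sup_edge hab, Finset.mem_filter]
  · ext G
    rw [mem_graphsWith_avoid_edge hab, Finset.mem_filter]

/-- The degrees left after removing a planted graph `H`. -/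
def resDeg {n : ℕ} (d : Fin n → ℕ) (H : SimpleGraph (Fin n)) (i : Fin n) : ℕ := d i - deg H i

theorem deg_sdiff_of_mem {n : ℕ} {d : Fin n → ℕ} {H F G : SimpleGraph (Fin n)}
    (hG : G ∈ graphsWith d H F) (i : Fin n) : deg (G \ H) i = resDeg d H i := by
  obtain ⟨h1, h2, -⟩ := mem_graphsWith.1 hG
  rw [deg_sdiff (fun p q h => h2 p q h), h1, resDeg]

open Classical in
/-- The pairs `(x, y)` along which the edge `ab` can be switched away from `G`. -/
def forwardPairs {n : ℕ} (H F : SimpleGraph (Fin n)) (a b : Fin n) (G : SimpleGraph (Fin n)) :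
    Finset (Fin n × Fin n) :=
  Finset.univ.filter fun p => (G.Adj p.1 p.2 ∧ ¬ H.Adj p.1 p.2) ∧
    (p.1 ≠ a ∧ ¬ G.Adj a p.1 ∧ ¬ F.Adj a p.1) ∧ (p.2 ≠ b ∧ ¬ G.Adj b p.2 ∧ ¬ F.Adj b p.2)

open Classical in
/-- The pairs `(x, y)` along which the edge `ab` can be switched into `G`. -/
def backwardPairs {n : ℕ} (H F : SimpleGraph (Fin n)) (a b : Fin n) (G : SimpleGraph (Fin n)) :
    Finset (Fin n × Fin n) :=
  Finset.univ.filter fun p => ((G.Adj a p.1 ∧ ¬ H.Adj a p.1) ∧ (G.Adj b p.2 ∧ ¬ H.Adj b p.2)) ∧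
    (p.1 ≠ p.2 ∧ ¬ G.Adj p.1 p.2 ∧ ¬ F.Adj p.1 p.2)

theorem sum_forwardPairs_eq_sum_backwardPairs {n : ℕ} (d : Fin n → ℕ)
    (H F : SimpleGraph (Fin n)) {a b : Fin n} (hab : a ≠ b) (hH : ¬ H.Adj a b)
    (hF : ¬ F.Adj a b) :
    ∑ G ∈ graphsWith d (H ⊔ SimpleGraph.edge a b) F, (forwardPairs H F a b G).card =
      ∑ G ∈ graphsWith d H (F ⊔ SimpleGraph.edge a b), (backwardPairs H F a b G).card := by
  classical
  simp only [forwardPairs, backwardPairs, Finset.card_filter]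
  rw [Finset.sum_comm, Finset.sum_comm (s := graphsWith d H (F ⊔ SimpleGraph.edge a b))]
  refine Finset.sum_congr rfl fun p _ => ?_
  obtain ⟨x, y⟩ := p
  simp only [← Finset.card_filter]
  refine Finset.card_nbij' (switch a b x y) (switch a x b y) ?_ ?_ ?_ ?_
  · intro G hG
    simp only [Finset.coe_filter, Set.mem_ofPred_eq, mem_graphsWith_sup_edge hab,
      mem_graphsWith_avoid_edge hab, mem_graphsWith] at hG ⊢
    obtain ⟨⟨⟨h1, h2, h3⟩, h4⟩, ⟨h5, h6⟩, ⟨h7, h8, h9⟩, h10, h11, h12⟩ := hG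
    have e1 := h4.symm
    have e2 := h5.symm
    have e3 := fun h => hH (H.adj_symm h)
    have e4 := fun h => h6 (H.adj_symm h)
    have e5 := fun h => h9 (F.adj_symm h)
    have e6 := fun h => h12 (F.adj_symm h)
    have e7 := fun h => h8 (h2 _ _ h)
    have e8 := fun h => h11 (h2 _ _ h)
    have e9 := h4.ne
    have e10 := h5.ne
    have e11 := h3 _ _ h5
    refine ⟨⟨⟨fun i => ?_, fun p q h => ?_, fun p q h => ?_⟩, ?_⟩, ?_⟩
    · rw [deg_switch h4 h5 h8 h11 (Ne.symm h7) (Ne.symm h10), h1]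
    · have := h2 _ _ h
      rw [switch_adj]
      grind
    · rw [switch_adj] at h
      grind
    · rw [switch_adj]
      grind
    · simp only [switch_adj]
      grind
  · intro G hG
    simp only [Finset.coe_filter, Set.mem_ofPred_eq, mem_graphsWith_sup_edge hab,
      mem_graphsWith_avoid_edge hab, mem_graphsWith] at hG ⊢
    obtain ⟨⟨⟨h1, h2, h3⟩, h4⟩, ⟨⟨h5, h6⟩, h7, h8⟩, h9, h10, h11⟩ := hG
    have e1 := h5.symm
    have e2 := h7.symm
    have e3 := fun h => h6 (H.adj_symm h)
    have e4 := fun h => h8 (H.adj_symm h)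
    have e5 := fun h => hF (F.adj_symm h)
    have e6 := fun h => h11 (F.adj_symm h)
    have e7 := fun h => h10 (h2 _ _ h)
    have e9 := h5.ne
    have e10 := h7.ne
    have e11 := h3 _ _ h5
    have e12 := h3 _ _ h7
    have e13 : x ≠ b := by rintro rfl; exact h4 h5
    have e14 : y ≠ a := by rintro rfl; exact h4 h7.symm
    refine ⟨⟨⟨fun i => ?_, fun p q h => ?_, fun p q h => ?_⟩, ?_⟩, ?_⟩
    · rw [deg_switch h5 h7 h4 h10 hab h9, h1]
    · have := h2 _ _ h
      rw [switch_adj]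
      grind
    · rw [switch_adj] at h
      grind
    · rw [switch_adj]
      grind
    · simp only [switch_adj]
      grind
  · intro G hG
    simp only [Finset.coe_filter, Set.mem_ofPred_eq, mem_graphsWith_sup_edge hab] at hG
    obtain ⟨⟨-, h4⟩, ⟨h5, -⟩, ⟨-, h8, -⟩, -, h11, -⟩ := hG
    exact switch_switch h4 h5 h8 h11
  · intro G hG
    simp only [Finset.coe_filter, Set.mem_ofPred_eq, mem_graphsWith_avoid_edge hab] at hG
    obtain ⟨⟨-, h4⟩, ⟨⟨h5, -⟩, h7, -⟩, -, h10, -⟩ := hG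
    exact switch_switch h5 h7 h4 h10

open Classical in
/-- The closed neighbourhood of `a` in `B`. -/
def closedNbhd {n : ℕ} (B : SimpleGraph (Fin n)) (a : Fin n) : Finset (Fin n) :=
  insert a (Finset.univ.filter fun x => B.Adj a x)

theorem mem_closedNbhd {n : ℕ} {B : SimpleGraph (Fin n)} {a x : Fin n} :
    x ∈ closedNbhd B a ↔ x = a ∨ B.Adj a x := by
  simp [closedNbhd]

theorem card_closedNbhd_le {n : ℕ} (B : SimpleGraph (Fin n)) (a : Fin n) :
    (closedNbhd B a).card ≤ deg B a + 1 := by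
  classical
  rw [closedNbhd, deg_eq_card]
  exact Finset.card_insert_le _ _

/-- Degrees at most `D`, and at most `K * D` in the forbidden graph. -/
structure DegBounds {n : ℕ} (d : Fin n → ℕ) (F : SimpleGraph (Fin n)) (D : ℕ) (K : ℝ) : Prop where
  one_le : 1 ≤ D
  nonneg : 0 ≤ K
  le : ∀ i, d i ≤ D
  avoid_le : ∀ i, (deg F i : ℝ) ≤ K * D

theorem DegBounds.card_closedNbhd_le {n : ℕ} {d : Fin n → ℕ} {F : SimpleGraph (Fin n)} {D : ℕ}
    {K : ℝ} (hb : DegBounds d F D K) {G : SimpleGraph (Fin n)} (hG : ∀ i, deg G i ≤ d i)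
    (a : Fin n) : ((closedNbhd (G ⊔ F) a).card : ℝ) ≤ (K + 2) * D := by
  have h1 : ((closedNbhd (G ⊔ F) a).card : ℝ) ≤ deg G a + deg F a + 1 := by
    exact_mod_cast (_root_.card_closedNbhd_le _ _).trans (Nat.succ_le_succ (deg_sup_le G F a))
  have h2 : (deg G a : ℝ) ≤ D := by exact_mod_cast (hG a).trans (hb.le a)
  have h3 : (1 : ℝ) ≤ D := by exact_mod_cast hb.one_le
  linarith [hb.avoid_le a]

theorem resDeg_le {n : ℕ} (d : Fin n → ℕ) (H : SimpleGraph (Fin n)) (i : Fin n) :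
    resDeg d H i ≤ d i := Nat.sub_le _ _

theorem sum_resDeg_sub_le_card_forwardPairs {n : ℕ} {d : Fin n → ℕ} {H F : SimpleGraph (Fin n)}
    {D : ℕ} {K : ℝ} (hb : DegBounds d F D K) (a b : Fin n) {H' G : SimpleGraph (Fin n)}
    (hHH' : H ≤ H') (hG : G ∈ graphsWith d H' F) :
    ∑ i, (resDeg d H i : ℝ) - 2 * (K + 2) * (D : ℝ) ^ 2 ≤ (forwardPairs H F a b G).card := by
  classical
  have hGH : G ∈ graphsWith d H F := by
    obtain ⟨h1, h2, h3⟩ := mem_graphsWith.1 hG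
    exact mem_graphsWith.2 ⟨h1, fun p q h => h2 p q (hHH' h), h3⟩
  have hGd : ∀ i, deg G i ≤ d i := fun i => ((mem_graphsWith.1 hG).1 i).le
  set R := G \ H with hR
  have hdR : ∀ i, (Finset.univ.filter fun y => R.Adj i y).card = resDeg d H i := fun i => by
    rw [← deg_eq_card, hR, deg_sdiff_of_mem hGH]
  set T : Finset (Fin n × Fin n) := Finset.univ.filter fun p => R.Adj p.1 p.2 with hT
  have hTcard : T.card = ∑ i, resDeg d H i := by
    rw [hT, Finset.card_filter, Fintype.sum_prod_type]
    exact Finset.sum_congr rfl fun x _ => by rw [← hdR, Finset.card_filter]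
  set T1 : Finset (Fin n × Fin n) := (closedNbhd (G ⊔ F) a).biUnion fun x =>
    (Finset.univ.filter fun y => R.Adj x y).image fun y => (x, y) with hT1
  set T2 : Finset (Fin n × Fin n) := (closedNbhd (G ⊔ F) b).biUnion fun y =>
    (Finset.univ.filter fun x => R.Adj y x).image fun x => (x, y) with hT2
  have hsub : T ⊆ forwardPairs H F a b G ∪ (T1 ∪ T2) := by
    rintro ⟨x, y⟩ hp
    have hp' : G.Adj x y ∧ ¬ H.Adj x y := by simpa [hT, hR] using hp
    simp only [hT1, hT2, forwardPairs, Finset.mem_union, Finset.mem_biUnion, Finset.mem_image,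
      Finset.mem_filter, Finset.mem_univ, true_and, mem_closedNbhd, SimpleGraph.sup_adj, hR,
      SimpleGraph.sdiff_adj, Prod.mk.injEq]
    have e1 := hp'.1.symm
    have e2 := fun h => hp'.2 (H.adj_symm h)
    grind
  have hc1 : T1.card ≤ (closedNbhd (G ⊔ F) a).card * D :=
    Finset.card_biUnion_le_card_mul _ _ _ fun x _ =>
      Finset.card_image_le.trans ((hdR x).le.trans ((resDeg_le d H x).trans (hb.le x)))
  have hc2 : T2.card ≤ (closedNbhd (G ⊔ F) b).card * D :=
    Finset.card_biUnion_le_card_mul _ _ _ fun x _ =>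
      Finset.card_image_le.trans ((hdR x).le.trans ((resDeg_le d H x).trans (hb.le x)))
  have h3 := (Finset.card_le_card hsub).trans (Finset.card_union_le _ _)
  have h4 := Finset.card_union_le T1 T2
  have h5 : T.card ≤ (forwardPairs H F a b G).card +
      ((closedNbhd (G ⊔ F) a).card * D + (closedNbhd (G ⊔ F) b).card * D) := by omega
  rw [hTcard] at h5
  have h6 : (∑ i, (resDeg d H i : ℝ)) ≤ (forwardPairs H F a b G).card +
      ((closedNbhd (G ⊔ F) a).card * (D : ℝ) + (closedNbhd (G ⊔ F) b).card * (D : ℝ)) := by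
    exact_mod_cast h5
  have hD : (0 : ℝ) ≤ D := Nat.cast_nonneg D
  have h7 := mul_le_mul_of_nonneg_right (hb.card_closedNbhd_le hGd a) hD
  have h8 := mul_le_mul_of_nonneg_right (hb.card_closedNbhd_le hGd b) hD
  nlinarith

theorem card_forwardPairs_le {n : ℕ} {d : Fin n → ℕ} {H F : SimpleGraph (Fin n)}
    (a b : Fin n) {H' G : SimpleGraph (Fin n)} (hHH' : H ≤ H') (hG : G ∈ graphsWith d H' F) :
    (forwardPairs H F a b G).card ≤ ∑ i, resDeg d H i := by
  classical
  have hGH : G ∈ graphsWith d H F := by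
    obtain ⟨h1, h2, h3⟩ := mem_graphsWith.1 hG
    exact mem_graphsWith.2 ⟨h1, fun p q h => h2 p q (hHH' h), h3⟩
  have : ∑ i, resDeg d H i =
      (Finset.univ.filter fun p : Fin n × Fin n => (G \ H).Adj p.1 p.2).card := by
    rw [Finset.card_filter, Fintype.sum_prod_type]
    exact Finset.sum_congr rfl fun x _ => by
      rw [← deg_sdiff_of_mem hGH, deg_eq_card, Finset.card_filter]
  rw [this]
  refine Finset.card_le_card fun p hp => ?_
  simp only [forwardPairs, Finset.mem_filter, Finset.mem_univ, true_and,
    SimpleGraph.sdiff_adj] at hp ⊢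
  exact hp.1

open Classical in
/-- The pairs `(x, y)` for which `ax` and `by` are edges of `G` outside `H`, but switching `ab`
into `G` is impossible. -/
def blockedPairs {n : ℕ} (H F : SimpleGraph (Fin n)) (a b : Fin n) (G : SimpleGraph (Fin n)) :
    Finset (Fin n × Fin n) :=
  Finset.univ.filter fun p => ((G.Adj a p.1 ∧ ¬ H.Adj a p.1) ∧ (G.Adj b p.2 ∧ ¬ H.Adj b p.2)) ∧
    (p.1 = p.2 ∨ G.Adj p.1 p.2 ∨ F.Adj p.1 p.2)

theorem card_backwardPairs_add {n : ℕ} {d : Fin n → ℕ} {H F F' : SimpleGraph (Fin n)}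
    (a b : Fin n) {G : SimpleGraph (Fin n)} (hG : G ∈ graphsWith d H F') :
    (backwardPairs H F a b G).card + (blockedPairs H F a b G).card =
      resDeg d H a * resDeg d H b := by
  classical
  rw [← deg_sdiff_of_mem hG, ← deg_sdiff_of_mem hG, deg_eq_card, deg_eq_card,
    ← Finset.card_product, ← Finset.card_filter_add_card_filter_not (s := _ ×ˢ _)
      (fun p : Fin n × Fin n => p.1 ≠ p.2 ∧ ¬ G.Adj p.1 p.2 ∧ ¬ F.Adj p.1 p.2)]
  refine congrArg₂ _ (congrArg Finset.card ?_) (congrArg Finset.card ?_)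
  · ext p
    simp [backwardPairs]
  · ext p
    simp only [blockedPairs, Finset.mem_filter, Finset.mem_univ, true_and, Finset.mem_product,
      SimpleGraph.sdiff_adj]
    tauto

theorem resDeg_sup_edge {n : ℕ} (d : Fin n → ℕ) (H : SimpleGraph (Fin n)) {a b : Fin n}
    (hab : a ≠ b) (hH : ¬ H.Adj a b) (i : Fin n) :
    resDeg d (H ⊔ SimpleGraph.edge a b) i =
      resDeg d H i - ((if i = a then 1 else 0) + (if i = b then 1 else 0)) := by
  rw [resDeg, deg_sup_edge H hab hH, resDeg]
  omega

theorem resDeg_sup_edge_le {n : ℕ} (d : Fin n → ℕ) (H : SimpleGraph (Fin n)) {a b : Fin n}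
    (hab : a ≠ b) (hH : ¬ H.Adj a b) (i : Fin n) :
    resDeg d (H ⊔ SimpleGraph.edge a b) i ≤ resDeg d H i := by
  rw [resDeg_sup_edge d H hab hH]
  exact Nat.sub_le _ _

theorem sum_resDeg_sup_edge {n : ℕ} (d : Fin n → ℕ) (H : SimpleGraph (Fin n)) {a b : Fin n}
    (hab : a ≠ b) (hH : ¬ H.Adj a b) :
    ∑ i, (resDeg d H i : ℝ) - 2 ≤ ∑ i, (resDeg d (H ⊔ SimpleGraph.edge a b) i : ℝ) := by
  have h : ∑ i, resDeg d H i ≤ ∑ i, (resDeg d (H ⊔ SimpleGraph.edge a b) i +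
      ((if i = a then 1 else 0) + (if i = b then 1 else 0))) :=
    Finset.sum_le_sum fun i _ => by rw [resDeg_sup_edge d H hab hH]; omega
  simp only [Finset.sum_add_distrib, Finset.sum_ite_eq', Finset.mem_univ, if_true] at h
  have h' : (∑ i, (resDeg d H i : ℝ)) ≤
      ∑ i, (resDeg d (H ⊔ SimpleGraph.edge a b) i : ℝ) + (1 + 1) := by exact_mod_cast h
  linarith

theorem card_graphsWith_sup_edge_mul_sub_le {n : ℕ} {d : Fin n → ℕ} {H F : SimpleGraph (Fin n)}
    {D : ℕ} {K : ℝ} (hb : DegBounds d F D K) {a b : Fin n} (hab : a ≠ b) (hH : ¬ H.Adj a b)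
    (hF : ¬ F.Adj a b) :
    ((graphsWith d (H ⊔ SimpleGraph.edge a b) F).card : ℝ) *
        (∑ i, (resDeg d H i : ℝ) - 2 * (K + 2) * (D : ℝ) ^ 2) ≤
      resDeg d H a * resDeg d H b * (graphsWith d H (F ⊔ SimpleGraph.edge a b)).card := by
  have h1 : ((graphsWith d (H ⊔ SimpleGraph.edge a b) F).card : ℝ) *
      (∑ i, (resDeg d H i : ℝ) - 2 * (K + 2) * (D : ℝ) ^ 2) ≤
      ∑ G ∈ graphsWith d (H ⊔ SimpleGraph.edge a b) F, ((forwardPairs H F a b G).card : ℝ) := by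
    rw [← nsmul_eq_mul]
    exact Finset.card_nsmul_le_sum _ _ _ fun G hG =>
      sum_resDeg_sub_le_card_forwardPairs hb a b le_sup_left hG
  have h2 : ∑ G ∈ graphsWith d H (F ⊔ SimpleGraph.edge a b), (backwardPairs H F a b G).card ≤
      (graphsWith d H (F ⊔ SimpleGraph.edge a b)).card • (resDeg d H a * resDeg d H b) :=
    Finset.sum_le_card_nsmul _ _ _ fun G hG => by
      have := card_backwardPairs_add (F := F) a b hG
      omega
  rw [← sum_forwardPairs_eq_sum_backwardPairs d H F hab hH hF, nsmul_eq_mul] at h2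
  have h3 : (∑ G ∈ graphsWith d (H ⊔ SimpleGraph.edge a b) F,
      ((forwardPairs H F a b G).card : ℝ)) ≤
      (graphsWith d H (F ⊔ SimpleGraph.edge a b)).card * (resDeg d H a * resDeg d H b) := by
    exact_mod_cast h2
  linarith

theorem card_graphsWith_sup_edge_of_adj {n : ℕ} (d : Fin n → ℕ) {H F : SimpleGraph (Fin n)}
    {a b : Fin n} (hab : a ≠ b) (hF : F.Adj a b) :
    (graphsWith d (H ⊔ SimpleGraph.edge a b) F).card = 0 := by
  rw [Finset.card_eq_zero, Finset.eq_empty_iff_forall_notMem]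
  intro G hG
  rw [mem_graphsWith_sup_edge hab, mem_graphsWith] at hG
  exact hG.1.2.2 a b hG.2 hF

theorem card_graphsWith_sup_edge_mul_le {n : ℕ} {d : Fin n → ℕ} {H F : SimpleGraph (Fin n)}
    {D : ℕ} {K : ℝ} (hb : DegBounds d F D K) {m : ℝ} (hm : m - 8 ≤ ∑ i, (resDeg d H i : ℝ))
    (hL : (4 * K + 24) * (D : ℝ) ^ 2 ≤ m) {a b : Fin n} (hab : a ≠ b) (hH : ¬ H.Adj a b) :
    ((graphsWith d (H ⊔ SimpleGraph.edge a b) F).card : ℝ) * m ≤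
      2 * (resDeg d H a * resDeg d H b) * (graphsWith d H F).card := by
  by_cases hF : F.Adj a b
  · rw [card_graphsWith_sup_edge_of_adj d hab hF]
    simp only [Nat.cast_zero, zero_mul]
    positivity
  have h1 := card_graphsWith_sup_edge_mul_sub_le hb hab hH hF
  have h2 : ((graphsWith d (H ⊔ SimpleGraph.edge a b) F).card : ℝ) +
      (graphsWith d H (F ⊔ SimpleGraph.edge a b)).card = (graphsWith d H F).card := by
    exact_mod_cast card_graphsWith_add d H F hab
  have hD : (1 : ℝ) ≤ (D : ℝ) ^ 2 := one_le_pow₀ (by exact_mod_cast hb.one_le)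
  have h3 : m / 2 ≤ ∑ i, (resDeg d H i : ℝ) - 2 * (K + 2) * (D : ℝ) ^ 2 := by
    nlinarith [hb.nonneg]
  have h4 := mul_le_mul_of_nonneg_left h3
    (Nat.cast_nonneg (α := ℝ) (graphsWith d (H ⊔ SimpleGraph.edge a b) F).card)
  have h5 : (0 : ℝ) ≤ resDeg d H a * resDeg d H b *
      (graphsWith d (H ⊔ SimpleGraph.edge a b) F).card := by positivity
  rw [← h2]
  linarith

/-- A one-edge refinement: graphs in which `ab` is an edge outside the planted graph. -/
theorem filter_adj_eq_graphsWith {n : ℕ} (d : Fin n → ℕ) (H F : SimpleGraph (Fin n))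
    {a b : Fin n} (hab : a ≠ b) (hH : ¬ H.Adj a b) (Q : SimpleGraph (Fin n) → Prop)
    [DecidablePred Q] [DecidablePred fun G => (G.Adj a b ∧ ¬ H.Adj a b) ∧ Q G] :
    ((graphsWith d H F).filter fun G => (G.Adj a b ∧ ¬ H.Adj a b) ∧ Q G) =
      (graphsWith d (H ⊔ SimpleGraph.edge a b) F).filter Q := by
  ext G
  simp only [Finset.mem_filter, mem_graphsWith_sup_edge hab]
  tauto

theorem card_filter_adj_mul_le {n : ℕ} {d : Fin n → ℕ} {H F : SimpleGraph (Fin n)}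
    {D : ℕ} {K : ℝ} (hb : DegBounds d F D K) {m : ℝ} (hm : m - 8 ≤ ∑ i, (resDeg d H i : ℝ))
    (hL : (4 * K + 24) * (D : ℝ) ^ 2 ≤ m) (a b : Fin n)
    [DecidablePred fun G : SimpleGraph (Fin n) => G.Adj a b ∧ ¬ H.Adj a b] :
    (((graphsWith d H F).filter fun G => G.Adj a b ∧ ¬ H.Adj a b).card : ℝ) * m ≤
      2 * (resDeg d H a * resDeg d H b) * (graphsWith d H F).card := by
  classical
  by_cases h : a ≠ b ∧ ¬ H.Adj a b
  · have := filter_adj_eq_graphsWith d H F h.1 h.2 (fun _ => True)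
    simp only [and_true, Finset.filter_true] at this
    rw [this]
    exact card_graphsWith_sup_edge_mul_le hb hm hL h.1 h.2
  · have : ((graphsWith d H F).filter fun G => G.Adj a b ∧ ¬ H.Adj a b) = ∅ := by
      rw [Finset.filter_eq_empty_iff]
      intro G _ hG
      exact h ⟨hG.1.ne, hG.2⟩
    rw [this]
    simp only [Finset.card_empty, Nat.cast_zero, zero_mul]
    positivity

theorem card_filter_two_adj_mul_le {n : ℕ} {d : Fin n → ℕ} {H F : SimpleGraph (Fin n)}
    {D : ℕ} {K : ℝ} (hb : DegBounds d F D K) {m : ℝ} (hm : m - 6 ≤ ∑ i, (resDeg d H i : ℝ))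
    (hL : (4 * K + 24) * (D : ℝ) ^ 2 ≤ m) (a x b y : Fin n) (hne : s(a, x) ≠ s(b, y))
    [DecidablePred fun G : SimpleGraph (Fin n) => (G.Adj a x ∧ ¬ H.Adj a x) ∧
        (G.Adj b y ∧ ¬ H.Adj b y)] :
    (((graphsWith d H F).filter fun G => (G.Adj a x ∧ ¬ H.Adj a x) ∧
        (G.Adj b y ∧ ¬ H.Adj b y)).card : ℝ) * m ^ 2 ≤
      4 * (resDeg d H a * resDeg d H x * (resDeg d H b * resDeg d H y)) *
        (graphsWith d H F).card := by
  classical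
  by_cases h : a ≠ x ∧ ¬ H.Adj a x
  · rw [filter_adj_eq_graphsWith d H F h.1 h.2]
    have hK := hb.nonneg
    have hm0 : 0 ≤ m := le_trans (by positivity) hL
    have h0 : ((graphsWith d (H ⊔ SimpleGraph.edge a x) F).filter fun G =>
        G.Adj b y ∧ ¬ H.Adj b y) = (graphsWith d (H ⊔ SimpleGraph.edge a x) F).filter fun G =>
        G.Adj b y ∧ ¬ (H ⊔ SimpleGraph.edge a x).Adj b y := by
      refine Finset.filter_congr fun G _ => ?_
      simp only [SimpleGraph.sup_adj, SimpleGraph.edge_adj]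
      rw [Ne, Sym2.eq_iff] at hne
      grind
    rw [h0]
    have h1 := card_graphsWith_sup_edge_mul_le hb (by linarith) hL h.1 h.2 (F := F)
    have h2 : (((graphsWith d (H ⊔ SimpleGraph.edge a x) F).filter fun G =>
        G.Adj b y ∧ ¬ (H ⊔ SimpleGraph.edge a x).Adj b y).card : ℝ) * m ≤ _ :=
      card_filter_adj_mul_le (H := H ⊔ SimpleGraph.edge a x) hb (m := m)
      (by linarith [sum_resDeg_sup_edge d H h.1 h.2]) hL b y
    have h3 : (resDeg d (H ⊔ SimpleGraph.edge a x) b : ℝ) *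
        resDeg d (H ⊔ SimpleGraph.edge a x) y ≤ resDeg d H b * resDeg d H y := by
      exact_mod_cast Nat.mul_le_mul (resDeg_sup_edge_le d H h.1 h.2 b)
        (resDeg_sup_edge_le d H h.1 h.2 y)
    have h4 := mul_le_mul_of_nonneg_right h2 hm0
    have h5 := mul_le_mul_of_nonneg_left h1
      (show (0 : ℝ) ≤ 2 * (resDeg d H b * resDeg d H y) by positivity)
    have h6 := mul_le_mul_of_nonneg_right h3
      (show (0 : ℝ) ≤ 2 * ((graphsWith d (H ⊔ SimpleGraph.edge a x) F).card * m) by positivity)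
    linarith
  · have : ((graphsWith d H F).filter fun G => (G.Adj a x ∧ ¬ H.Adj a x) ∧
        (G.Adj b y ∧ ¬ H.Adj b y)) = ∅ := by
      rw [Finset.filter_eq_empty_iff]
      intro G _ hG
      exact h ⟨hG.1.1.ne, hG.1.2⟩
    rw [this]
    simp only [Finset.card_empty, Nat.cast_zero, zero_mul]
    positivity

theorem card_filter_three_adj_mul_le {n : ℕ} {d : Fin n → ℕ} {H F : SimpleGraph (Fin n)}
    {D : ℕ} {K : ℝ} (hb : DegBounds d F D K) {m : ℝ} (hm : m - 4 ≤ ∑ i, (resDeg d H i : ℝ))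
    (hL : (4 * K + 24) * (D : ℝ) ^ 2 ≤ m) (a x b y p q : Fin n) (h12 : s(a, x) ≠ s(b, y))
    (h13 : s(p, q) ≠ s(a, x)) (h23 : s(p, q) ≠ s(b, y))
    [DecidablePred fun G : SimpleGraph (Fin n) => (G.Adj p q ∧ ¬ H.Adj p q) ∧
        (G.Adj a x ∧ ¬ H.Adj a x) ∧ (G.Adj b y ∧ ¬ H.Adj b y)] :
    (((graphsWith d H F).filter fun G => (G.Adj p q ∧ ¬ H.Adj p q) ∧ (G.Adj a x ∧ ¬ H.Adj a x) ∧
        (G.Adj b y ∧ ¬ H.Adj b y)).card : ℝ) * m ^ 3 ≤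
      8 * (resDeg d H p * resDeg d H q * (resDeg d H a * resDeg d H x) *
        (resDeg d H b * resDeg d H y)) * (graphsWith d H F).card := by
  classical
  by_cases h : p ≠ q ∧ ¬ H.Adj p q
  · rw [filter_adj_eq_graphsWith d H F h.1 h.2]
    have hK := hb.nonneg
    have hm0 : 0 ≤ m := le_trans (by positivity) hL
    have h0 : ((graphsWith d (H ⊔ SimpleGraph.edge p q) F).filter fun G =>
        (G.Adj a x ∧ ¬ H.Adj a x) ∧ (G.Adj b y ∧ ¬ H.Adj b y)) =
        (graphsWith d (H ⊔ SimpleGraph.edge p q) F).filter fun G =>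
        (G.Adj a x ∧ ¬ (H ⊔ SimpleGraph.edge p q).Adj a x) ∧
          (G.Adj b y ∧ ¬ (H ⊔ SimpleGraph.edge p q).Adj b y) := by
      refine Finset.filter_congr fun G _ => ?_
      simp only [SimpleGraph.sup_adj, SimpleGraph.edge_adj]
      rw [Ne, Sym2.eq_iff] at h13 h23
      grind
    rw [h0]
    have h1 := card_graphsWith_sup_edge_mul_le hb (by linarith) hL h.1 h.2 (F := F)
    have h2 : (((graphsWith d (H ⊔ SimpleGraph.edge p q) F).filter fun G =>
        (G.Adj a x ∧ ¬ (H ⊔ SimpleGraph.edge p q).Adj a x) ∧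
          (G.Adj b y ∧ ¬ (H ⊔ SimpleGraph.edge p q).Adj b y)).card : ℝ) * m ^ 2 ≤ _ :=
      card_filter_two_adj_mul_le (H := H ⊔ SimpleGraph.edge p q) hb (m := m)
      (by linarith [sum_resDeg_sup_edge d H h.1 h.2]) hL a x b y h12
    have h3 : (resDeg d (H ⊔ SimpleGraph.edge p q) a : ℝ) *
        resDeg d (H ⊔ SimpleGraph.edge p q) x * (resDeg d (H ⊔ SimpleGraph.edge p q) b *
        resDeg d (H ⊔ SimpleGraph.edge p q) y) ≤
        resDeg d H a * resDeg d H x * (resDeg d H b * resDeg d H y) := by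
      exact_mod_cast Nat.mul_le_mul
        (Nat.mul_le_mul (resDeg_sup_edge_le d H h.1 h.2 a) (resDeg_sup_edge_le d H h.1 h.2 x))
        (Nat.mul_le_mul (resDeg_sup_edge_le d H h.1 h.2 b) (resDeg_sup_edge_le d H h.1 h.2 y))
    have h4 := mul_le_mul_of_nonneg_right h2 hm0
    have h5 := mul_le_mul_of_nonneg_left h1
      (show (0 : ℝ) ≤ 4 * (resDeg d H a * resDeg d H x * (resDeg d H b * resDeg d H y)) by
        positivity)
    have h6 := mul_le_mul_of_nonneg_right h3
      (show (0 : ℝ) ≤ 4 * ((graphsWith d (H ⊔ SimpleGraph.edge p q) F).card * m) by positivity)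
    linarith
  · have : ((graphsWith d H F).filter fun G => (G.Adj p q ∧ ¬ H.Adj p q) ∧
        (G.Adj a x ∧ ¬ H.Adj a x) ∧ (G.Adj b y ∧ ¬ H.Adj b y)) = ∅ := by
      rw [Finset.filter_eq_empty_iff]
      intro G _ hG
      exact h ⟨hG.1.1.ne, hG.1.2⟩
    rw [this]
    simp only [Finset.card_empty, Nat.cast_zero, zero_mul]
    positivity

theorem DegBounds.sup_edge {n : ℕ} {d : Fin n → ℕ} {F : SimpleGraph (Fin n)} {D : ℕ} {K : ℝ}
    (hb : DegBounds d F D K) {a b : Fin n} (hab : a ≠ b) (hF : ¬ F.Adj a b) :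
    DegBounds d (F ⊔ SimpleGraph.edge a b) D (K + 1) := by
  have hD : (1 : ℝ) ≤ D := by exact_mod_cast hb.one_le
  refine ⟨hb.one_le, by linarith [hb.nonneg], hb.le, fun i => ?_⟩
  have h1 : (deg (F ⊔ SimpleGraph.edge a b) i : ℝ) ≤ deg F i + 1 := by
    rw [deg_sup_edge F hab hF]
    push_cast
    split_ifs <;> grind
  linarith [hb.avoid_le i]

theorem sum_sum_mul_le {n : ℕ} (N : Fin n → Finset (Fin n)) {f g : Fin n → ℝ} {c L : ℝ}
    (hf : ∀ x, 0 ≤ f x) (hc : 0 ≤ c) (hg : ∀ x, g x ≤ c) (hN : ∀ x, ((N x).card : ℝ) ≤ L) :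
    ∑ x, ∑ y ∈ N x, f x * g y ≤ L * c * ∑ x, f x := by
  rw [Finset.mul_sum]
  refine Finset.sum_le_sum fun x _ => ?_
  rw [← Finset.mul_sum]
  have h1 : ∑ y ∈ N x, g y ≤ (N x).card • c := Finset.sum_le_card_nsmul _ _ _ fun y _ => hg y
  rw [nsmul_eq_mul] at h1
  have h2 := mul_le_mul_of_nonneg_right (hN x) hc
  have h3 := mul_le_mul_of_nonneg_left (h1.trans h2) (hf x)
  linarith

theorem sum_card_blockedPairs_mul_le {n : ℕ} {d : Fin n → ℕ} {H F : SimpleGraph (Fin n)}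
    {D : ℕ} {K K' : ℝ} {a b : Fin n} (hb : DegBounds d F D K)
    (hb' : DegBounds d (F ⊔ SimpleGraph.edge a b) D K') {m : ℝ}
    (hm : m - 4 ≤ ∑ i, (resDeg d H i : ℝ)) (hm' : ∑ i, (resDeg d H i : ℝ) ≤ m)
    (hL : (4 * K' + 24) * (D : ℝ) ^ 2 ≤ m) (hab : a ≠ b) :
    (∑ G ∈ graphsWith d H (F ⊔ SimpleGraph.edge a b), ((blockedPairs H F a b G).card : ℝ)) * m ≤
      (4 * K + 16) * (D : ℝ) ^ 2 * (resDeg d H a * resDeg d H b) *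
        (graphsWith d H (F ⊔ SimpleGraph.edge a b)).card := by
  classical
  set A := graphsWith d H (F ⊔ SimpleGraph.edge a b) with hA
  rcases A.eq_empty_or_nonempty with hE | ⟨G₀, hG₀⟩
  · simp [hE]
  have hnab : ∀ G ∈ A, ¬ G.Adj a b := fun G hG => ((mem_graphsWith_avoid_edge hab).1 hG).2
  have hHd : ∀ i, deg H i ≤ d i := fun i => by
    obtain ⟨h1, h2, -⟩ := mem_graphsWith.1 hG₀
    exact (deg_mono (fun p q h => h2 p q h) i).trans (h1 i).le
  set t : Fin n → ℝ := fun i => (resDeg d H i : ℝ) with ht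
  have ht0 : ∀ i, 0 ≤ t i := fun i => Nat.cast_nonneg _
  have htD : ∀ i, t i ≤ D := fun i => Nat.cast_le.2 ((resDeg_le d H i).trans (hb.le i))
  have hD : (1 : ℝ) ≤ D := by exact_mod_cast hb.one_le
  have hD2 : (1 : ℝ) ≤ (D : ℝ) ^ 2 := one_le_pow₀ hD
  have hmpos : 0 < m := by nlinarith [hb'.nonneg]
  set c2 : Fin n → Fin n → ℕ := fun x y => (A.filter fun G =>
    (G.Adj a x ∧ ¬ H.Adj a x) ∧ (G.Adj b y ∧ ¬ H.Adj b y)).card with hc2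
  set c3 : Fin n → Fin n → ℕ := fun x y => (A.filter fun G => (G.Adj x y ∧ ¬ H.Adj x y) ∧
    (G.Adj a x ∧ ¬ H.Adj a x) ∧ (G.Adj b y ∧ ¬ H.Adj b y)).card with hc3
  have hc2le : ∀ x y, (c2 x y : ℝ) * m ^ 2 ≤ 4 * (t a * t x * (t b * t y)) * A.card := by
    intro x y
    by_cases hxy : s(a, x) = s(b, y)
    · have : c2 x y = 0 := by
        rw [hc2, Finset.card_eq_zero, Finset.filter_eq_empty_iff]
        intro G hG hG'
        have := hnab G hG
        rw [Sym2.eq_iff] at hxy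
        grind
      rw [this]
      have := ht0 a; have := ht0 b; have := ht0 x; have := ht0 y
      simp only [Nat.cast_zero, zero_mul]
      positivity
    · exact card_filter_two_adj_mul_le hb' (by linarith) hL a x b y hxy
  have hc3le : ∀ x y, (c3 x y : ℝ) * m ^ 3 ≤
      8 * (t x * t y * (t a * t x) * (t b * t y)) * A.card := by
    intro x y
    by_cases hxy : s(a, x) ≠ s(b, y) ∧ s(x, y) ≠ s(a, x) ∧ s(x, y) ≠ s(b, y)
    · exact card_filter_three_adj_mul_le hb' (by linarith) hL a x b y x y hxy.1 hxy.2.1 hxy.2.2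
    · have : c3 x y = 0 := by
        rw [hc3, Finset.card_eq_zero, Finset.filter_eq_empty_iff]
        intro G hG hG'
        have := hnab G hG
        have h1 := hG'.2.1.1.symm
        have h2 := hG'.2.2.1.symm
        have h3 := hG'.1.1.ne
        simp only [Ne, Sym2.eq_iff] at hxy
        grind
      rw [this]
      have := ht0 a; have := ht0 b; have := ht0 x; have := ht0 y
      simp only [Nat.cast_zero, zero_mul]
      positivity
  have hsum : ∑ G ∈ A, (blockedPairs H F a b G).card ≤
      (∑ x, ∑ y ∈ closedNbhd (H ⊔ F) x, c2 x y) + ∑ x, ∑ y, c3 x y := by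
    have h1 : ∀ G ∈ A, (blockedPairs H F a b G).card ≤
        (∑ x, ∑ y ∈ closedNbhd (H ⊔ F) x,
          if (G.Adj a x ∧ ¬ H.Adj a x) ∧ (G.Adj b y ∧ ¬ H.Adj b y) then 1 else 0) +
        ∑ x, ∑ y, if (G.Adj x y ∧ ¬ H.Adj x y) ∧
          (G.Adj a x ∧ ¬ H.Adj a x) ∧ (G.Adj b y ∧ ¬ H.Adj b y) then 1 else 0 := by
      intro G _
      rw [blockedPairs, Finset.card_filter, Fintype.sum_prod_type, ← Finset.sum_add_distrib]
      refine Finset.sum_le_sum fun x _ => ?_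
      have hs : ∀ f : Fin n → ℕ, ∑ y ∈ closedNbhd (H ⊔ F) x, f y =
          ∑ y, if y ∈ closedNbhd (H ⊔ F) x then f y else 0 := fun f => by
        rw [Finset.sum_ite_mem, Finset.univ_inter]
      rw [hs, ← Finset.sum_add_distrib]
      refine Finset.sum_le_sum fun y _ => ?_
      simp only [mem_closedNbhd, SimpleGraph.sup_adj]
      grind
    refine (Finset.sum_le_sum h1).trans (le_of_eq ?_)
    rw [Finset.sum_add_distrib]
    simp only [hc2, hc3, Finset.card_filter]
    congr 1
    · rw [Finset.sum_comm]
      exact Finset.sum_congr rfl fun x _ => Finset.sum_comm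
    · rw [Finset.sum_comm]
      exact Finset.sum_congr rfl fun x _ => Finset.sum_comm
  have hsumR : (∑ G ∈ A, ((blockedPairs H F a b G).card : ℝ)) ≤
      (∑ x, ∑ y ∈ closedNbhd (H ⊔ F) x, (c2 x y : ℝ)) + ∑ x, ∑ y, (c3 x y : ℝ) := by
    exact_mod_cast hsum
  have hS2 : (∑ x, ∑ y ∈ closedNbhd (H ⊔ F) x, (c2 x y : ℝ)) * m ^ 2 ≤
      4 * (t a * t b) * A.card * ((K + 2) * D * D * m) := by
    have h1 : (∑ x, ∑ y ∈ closedNbhd (H ⊔ F) x, (c2 x y : ℝ)) * m ^ 2 ≤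
        ∑ x, ∑ y ∈ closedNbhd (H ⊔ F) x, 4 * (t a * t b) * A.card * (t x * t y) := by
      simp only [Finset.sum_mul]
      exact Finset.sum_le_sum fun x _ => Finset.sum_le_sum fun y _ => by linarith [hc2le x y]
    simp only [← Finset.mul_sum] at h1
    refine h1.trans (mul_le_mul_of_nonneg_left ?_
      (by have := ht0 a; have := ht0 b; positivity))
    simp only [Finset.mul_sum]
    refine (sum_sum_mul_le (closedNbhd (H ⊔ F)) ht0 (Nat.cast_nonneg D) htD
      (fun x => hb.card_closedNbhd_le hHd x)).trans ?_
    have := hb.nonneg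
    exact mul_le_mul_of_nonneg_left hm' (by positivity)
  have hS3 : (∑ x, ∑ y, (c3 x y : ℝ)) * m ^ 3 ≤
      8 * (t a * t b) * A.card * ((D * m) * (D * m)) := by
    have h1 : (∑ x, ∑ y, (c3 x y : ℝ)) * m ^ 3 ≤
        ∑ x, ∑ y, 8 * (t a * t b) * A.card * ((t x * t x) * (t y * t y)) := by
      simp only [Finset.sum_mul]
      exact Finset.sum_le_sum fun x _ => Finset.sum_le_sum fun y _ => by linarith [hc3le x y]
    simp only [← Finset.mul_sum, ← Finset.sum_mul] at h1
    refine h1.trans (mul_le_mul_of_nonneg_left ?_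
      (by have := ht0 a; have := ht0 b; positivity))
    have h2 : ∑ x, t x * t x ≤ D * m := by
      refine (Finset.sum_le_sum fun x _ => mul_le_mul_of_nonneg_right (htD x) (ht0 x)).trans ?_
      rw [← Finset.mul_sum]
      exact mul_le_mul_of_nonneg_left hm' (Nat.cast_nonneg D)
    exact mul_le_mul h2 h2 (Finset.sum_nonneg fun x _ => mul_nonneg (ht0 x) (ht0 x))
      (by positivity)
  have hm3 : 0 < m ^ 2 := by positivity
  refine le_of_mul_le_mul_right ?_ hm3
  have h5 := mul_le_mul_of_nonneg_right hsumR (show 0 ≤ m ^ 3 by positivity)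
  have h6 := mul_le_mul_of_nonneg_right hS2 hmpos.le
  linarith

/-- The switching estimate for the number of graphs containing a given edge. -/
theorem abs_card_graphsWith_sup_edge_sub_le {n : ℕ} {d : Fin n → ℕ} {H F : SimpleGraph (Fin n)}
    {D : ℕ} {K : ℝ} {a b : Fin n} (hb : DegBounds d F D K) {m : ℝ}
    (hm : m - 4 ≤ ∑ i, (resDeg d H i : ℝ)) (hm' : ∑ i, (resDeg d H i : ℝ) ≤ m)
    (hL : (4 * (K + 1) + 24) * (D : ℝ) ^ 2 ≤ m) (hab : a ≠ b) (hH : ¬ H.Adj a b)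
    (hF : ¬ F.Adj a b) :
    |((graphsWith d (H ⊔ SimpleGraph.edge a b) F).card : ℝ) -
        resDeg d H a * resDeg d H b / m * (graphsWith d H F).card| ≤
      (4 * K + 18) * ((D : ℝ) ^ 2 / m) *
        (resDeg d H a * resDeg d H b / m * (graphsWith d H F).card) := by
  have hK := hb.nonneg
  have hD : (1 : ℝ) ≤ D := by exact_mod_cast hb.one_le
  have hD2 : (1 : ℝ) ≤ (D : ℝ) ^ 2 := one_le_pow₀ hD
  have hmpos : 0 < m := by nlinarith
  have hb' := hb.sup_edge hab hF
  have hPQ : ((graphsWith d (H ⊔ SimpleGraph.edge a b) F).card : ℝ) +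
      (graphsWith d H (F ⊔ SimpleGraph.edge a b)).card = (graphsWith d H F).card := by
    exact_mod_cast card_graphsWith_add d H F hab
  have hTD : (resDeg d H a : ℝ) * resDeg d H b ≤ (D : ℝ) ^ 2 := by
    have : resDeg d H a * resDeg d H b ≤ D ^ 2 := by
      rw [sq]
      exact Nat.mul_le_mul ((resDeg_le d H a).trans (hb.le a)) ((resDeg_le d H b).trans (hb.le b))
    exact_mod_cast this
  set P := ((graphsWith d (H ⊔ SimpleGraph.edge a b) F).card : ℝ)
  set Q := ((graphsWith d H (F ⊔ SimpleGraph.edge a b)).card : ℝ)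
  set N := ((graphsWith d H F).card : ℝ)
  set T := (resDeg d H a : ℝ) * resDeg d H b with hT
  have hP0 : 0 ≤ P := Nat.cast_nonneg _
  have hQ0 : 0 ≤ Q := Nat.cast_nonneg _
  have hT0 : 0 ≤ T := by positivity
  have hup := card_graphsWith_sup_edge_mul_le hb (H := H) (F := F) (m := m)
    (by linarith) (by nlinarith) hab hH
  have hup' := card_graphsWith_sup_edge_mul_sub_le hb hab hH hF
  have hblock := sum_card_blockedPairs_mul_le hb hb' hm hm' hL hab
  have hback : Q * T ≤ P * m + ∑ G ∈ graphsWith d H (F ⊔ SimpleGraph.edge a b),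
      ((blockedPairs H F a b G).card : ℝ) := by
    have h1 : ∑ G ∈ graphsWith d (H ⊔ SimpleGraph.edge a b) F,
        (forwardPairs H F a b G).card ≤
        (graphsWith d (H ⊔ SimpleGraph.edge a b) F).card • ∑ i, resDeg d H i :=
      Finset.sum_le_card_nsmul _ _ _ fun G hG => card_forwardPairs_le a b le_sup_left hG
    rw [sum_forwardPairs_eq_sum_backwardPairs d H F hab hH hF, smul_eq_mul] at h1
    have h2 : ∑ G ∈ graphsWith d H (F ⊔ SimpleGraph.edge a b), ((backwardPairs H F a b G).card +
        (blockedPairs H F a b G).card) =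
        (graphsWith d H (F ⊔ SimpleGraph.edge a b)).card * (resDeg d H a * resDeg d H b) := by
      rw [Finset.sum_congr rfl fun G hG => card_backwardPairs_add (F := F) a b hG,
        Finset.sum_const, smul_eq_mul]
    rw [Finset.sum_add_distrib] at h2
    have h3 : Q * T ≤ P * ∑ i, (resDeg d H i : ℝ) +
        ∑ G ∈ graphsWith d H (F ⊔ SimpleGraph.edge a b), ((blockedPairs H F a b G).card : ℝ) := by
      have h4 : (graphsWith d H (F ⊔ SimpleGraph.edge a b)).card *
          (resDeg d H a * resDeg d H b) ≤
          (graphsWith d (H ⊔ SimpleGraph.edge a b) F).card * ∑ i, resDeg d H i +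
          ∑ G ∈ graphsWith d H (F ⊔ SimpleGraph.edge a b), (blockedPairs H F a b G).card := by
        omega
      have h5 := (Nat.cast_le (α := ℝ)).2 h4
      push_cast at h5
      exact h5
    have h5 := mul_le_mul_of_nonneg_left hm' hP0
    linarith
  set B := ∑ G ∈ graphsWith d H (F ⊔ SimpleGraph.edge a b), ((blockedPairs H F a b G).card : ℝ)
  have hN0 : 0 ≤ N := by linarith
  have key : |P * m - T * N| * m ≤ (4 * K + 18) * (D : ℝ) ^ 2 * (T * N) := by
    rw [← abs_of_pos hmpos, ← abs_mul, abs_of_pos hmpos, abs_le]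
    have hTN : 0 ≤ T * N := by positivity
    constructor
    · have h1 := mul_le_mul_of_nonneg_right hback hmpos.le
      have h2 : T * (P * m) ≤ (D : ℝ) ^ 2 * (2 * (T * N)) := by
        refine (mul_le_mul_of_nonneg_left hup hT0).trans ?_
        have := mul_le_mul_of_nonneg_right hTD (show 0 ≤ 2 * (T * N) by positivity)
        linarith
      have h3 : (4 * K + 16) * (D : ℝ) ^ 2 * T * Q ≤ (4 * K + 16) * (D : ℝ) ^ 2 * T * N :=
        mul_le_mul_of_nonneg_left (by linarith) (by positivity)
      have h4 : Q * T * m = (N - P) * T * m := by rw [← hPQ]; ring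
      linarith
    · have h1 : P * (m - 4 - 2 * (K + 2) * (D : ℝ) ^ 2) ≤ T * N := by
        refine (mul_le_mul_of_nonneg_left ?_ hP0).trans
          (hup'.trans (mul_le_mul_of_nonneg_left (by linarith) hT0))
        linarith
      have h2 := mul_le_mul_of_nonneg_right h1 hmpos.le
      have h3 := mul_le_mul_of_nonneg_right hup
        (show 0 ≤ 4 + 2 * (K + 2) * (D : ℝ) ^ 2 by positivity)
      have h4 : (4 + 2 * (K + 2) * (D : ℝ) ^ 2) * (2 * (T * N)) ≤
          (4 * K + 16) * (D : ℝ) ^ 2 * (T * N) := by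
        have := mul_le_mul_of_nonneg_right hD2 (show 0 ≤ 8 * (T * N) by positivity)
        linarith
      have h5 : 0 ≤ (D : ℝ) ^ 2 * (T * N) := by positivity
      linarith
  have e1 : P - T / m * N = (P * m - T * N) / m := by field_simp
  have e2 : (4 * K + 18) * ((D : ℝ) ^ 2 / m) * (T / m * N) =
      (4 * K + 18) * (D : ℝ) ^ 2 * (T * N) / m / m := by field_simp
  rw [e1, e2, abs_div, abs_of_pos hmpos]
  refine div_le_div_of_nonneg_right ?_ hmpos.le
  rwa [le_div_iff₀ hmpos]

theorem abs_sub_mul_le_of_abs_sub_le {N N₁ N₂ p q e₁ e₂ : ℝ} (hq : 0 ≤ q)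
    (he₂ : 0 ≤ e₂) (h₁ : |N₁ - p * N| ≤ e₁ * (p * N))
    (h₂ : |N₂ - q * N₁| ≤ e₂ * (q * N₁)) :
    |N₂ - q * p * N| ≤ (e₁ + e₂ * (1 + e₁)) * (q * p * N) := by
  have h3 := (abs_le.1 h₁).2
  have h4 : N₂ - q * p * N = (N₂ - q * N₁) + q * (N₁ - p * N) := by ring
  have h5 : |q * (N₁ - p * N)| ≤ q * (e₁ * (p * N)) := by
    rw [abs_mul, abs_of_nonneg hq]
    exact mul_le_mul_of_nonneg_left h₁ hq
  have h6 : e₂ * (q * N₁) ≤ e₂ * (q * ((1 + e₁) * (p * N))) :=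
    mul_le_mul_of_nonneg_left (mul_le_mul_of_nonneg_left (by linarith) hq) he₂
  rw [h4]
  refine (abs_add_le _ _).trans ?_
  linarith

theorem abs_card_graphsWith_two_edges_sub_le {n : ℕ} {d : Fin n → ℕ}
    {H F : SimpleGraph (Fin n)} {D : ℕ} {K : ℝ} (hb : DegBounds d F D K) {m : ℝ}
    (hm : m - 2 ≤ ∑ i, (resDeg d H i : ℝ)) (hm' : ∑ i, (resDeg d H i : ℝ) ≤ m)
    (hL : (4 * (K + 1) + 24) * (D : ℝ) ^ 2 ≤ m) {a x b y : Fin n} (hax : a ≠ x)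
    (hHax : ¬ H.Adj a x) (hFax : ¬ F.Adj a x) (hby : b ≠ y)
    (hHby : ¬ (H ⊔ SimpleGraph.edge a x).Adj b y) (hFby : ¬ F.Adj b y) :
    |((graphsWith d (H ⊔ SimpleGraph.edge a x ⊔ SimpleGraph.edge b y) F).card : ℝ) -
        resDeg d (H ⊔ SimpleGraph.edge a x) b * resDeg d (H ⊔ SimpleGraph.edge a x) y / m *
          (resDeg d H a * resDeg d H x / m) * (graphsWith d H F).card| ≤
      3 * ((4 * K + 18) * ((D : ℝ) ^ 2 / m)) *
        (resDeg d (H ⊔ SimpleGraph.edge a x) b * resDeg d (H ⊔ SimpleGraph.edge a x) y / m *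
          (resDeg d H a * resDeg d H x / m) * (graphsWith d H F).card) := by
  have hK := hb.nonneg
  have hm0 : 0 ≤ m := le_trans (by positivity) hL
  have he1 : (4 * K + 18) * ((D : ℝ) ^ 2 / m) ≤ 1 := by
    rw [← mul_div_assoc]
    exact div_le_one_of_le₀ (by nlinarith [sq_nonneg (D : ℝ)]) hm0
  have he0 : 0 ≤ (4 * K + 18) * ((D : ℝ) ^ 2 / m) := by positivity
  have hs := sum_resDeg_sup_edge d H hax hHax
  have hs' : ∑ i, (resDeg d (H ⊔ SimpleGraph.edge a x) i : ℝ) ≤ m :=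
    le_trans (Finset.sum_le_sum fun i _ => Nat.cast_le.2 (resDeg_sup_edge_le d H hax hHax i)) hm'
  have h1 := abs_card_graphsWith_sup_edge_sub_le hb (by linarith) hm' hL hax hHax hFax
  have h2 := abs_card_graphsWith_sup_edge_sub_le hb (by linarith) hs' hL hby hHby hFby
  refine (abs_sub_mul_le_of_abs_sub_le (by positivity) he0 h1 h2).trans (mul_le_mul_of_nonneg_right ?_ (by positivity))
  nlinarith

theorem abs_card_graphsWith_three_edges_sub_le {n : ℕ} {d : Fin n → ℕ}
    {H F : SimpleGraph (Fin n)} {D : ℕ} {K : ℝ} (hb : DegBounds d F D K) {m : ℝ}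
    (hm : m ≤ ∑ i, (resDeg d H i : ℝ)) (hm' : ∑ i, (resDeg d H i : ℝ) ≤ m)
    (hL : (4 * (K + 1) + 24) * (D : ℝ) ^ 2 ≤ m) {a x b y p q : Fin n} (hax : a ≠ x)
    (hHax : ¬ H.Adj a x) (hFax : ¬ F.Adj a x) (hby : b ≠ y)
    (hHby : ¬ (H ⊔ SimpleGraph.edge a x).Adj b y) (hFby : ¬ F.Adj b y) (hpq : p ≠ q)
    (hHpq : ¬ (H ⊔ SimpleGraph.edge a x ⊔ SimpleGraph.edge b y).Adj p q) (hFpq : ¬ F.Adj p q) :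
    |((graphsWith d (H ⊔ SimpleGraph.edge a x ⊔ SimpleGraph.edge b y ⊔ SimpleGraph.edge p q)
          F).card : ℝ) -
        resDeg d (H ⊔ SimpleGraph.edge a x ⊔ SimpleGraph.edge b y) p *
          resDeg d (H ⊔ SimpleGraph.edge a x ⊔ SimpleGraph.edge b y) q / m *
        (resDeg d (H ⊔ SimpleGraph.edge a x) b * resDeg d (H ⊔ SimpleGraph.edge a x) y / m *
          (resDeg d H a * resDeg d H x / m)) * (graphsWith d H F).card| ≤
      7 * ((4 * K + 18) * ((D : ℝ) ^ 2 / m)) *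
        (resDeg d (H ⊔ SimpleGraph.edge a x ⊔ SimpleGraph.edge b y) p *
          resDeg d (H ⊔ SimpleGraph.edge a x ⊔ SimpleGraph.edge b y) q / m *
        (resDeg d (H ⊔ SimpleGraph.edge a x) b * resDeg d (H ⊔ SimpleGraph.edge a x) y / m *
          (resDeg d H a * resDeg d H x / m)) * (graphsWith d H F).card) := by
  have hK := hb.nonneg
  have hm0 : 0 ≤ m := le_trans (by positivity) hL
  have he1 : (4 * K + 18) * ((D : ℝ) ^ 2 / m) ≤ 1 := by
    rw [← mul_div_assoc]
    exact div_le_one_of_le₀ (by nlinarith [sq_nonneg (D : ℝ)]) hm0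
  have he0 : 0 ≤ (4 * K + 18) * ((D : ℝ) ^ 2 / m) := by positivity
  have hs := sum_resDeg_sup_edge d H hax hHax
  have ht := sum_resDeg_sup_edge d (H ⊔ SimpleGraph.edge a x) hby hHby
  have ht' : ∑ i, (resDeg d (H ⊔ SimpleGraph.edge a x ⊔ SimpleGraph.edge b y) i : ℝ) ≤ m :=
    le_trans (Finset.sum_le_sum fun i _ => Nat.cast_le.2 ((resDeg_sup_edge_le d _ hby hHby i).trans
      (resDeg_sup_edge_le d H hax hHax i))) hm'
  have h1 := abs_card_graphsWith_two_edges_sub_le hb (by linarith) hm' hL hax hHax hFax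
    hby hHby hFby
  have h2 := abs_card_graphsWith_sup_edge_sub_le hb (by linarith) ht' hL hpq hHpq hFpq
  refine (abs_sub_mul_le_of_abs_sub_le (by positivity) he0 h1 h2).trans (mul_le_mul_of_nonneg_right ?_ (by positivity))
  nlinarith

theorem not_adj_of_mem_closedNbhd {n : ℕ} {d : Fin n → ℕ} {H F G : SimpleGraph (Fin n)}
    (hG : G ∈ graphsWith d H F) {x w : Fin n} (hx : x ∈ closedNbhd (H ⊔ F) w)
    (h : G.Adj x w) (hH : ¬ H.Adj x w) : False := by
  have h1 := (mem_graphsWith.1 hG).2.2 w x h.symm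
  rw [mem_closedNbhd, SimpleGraph.sup_adj] at hx
  rcases hx with rfl | hx | hx
  · exact h.ne rfl
  · exact hH hx.symm
  · exact h1 hx

theorem abs_card_filter_common_sub_le {n : ℕ} {d : Fin n → ℕ}
    {H F : SimpleGraph (Fin n)} {D : ℕ} {K : ℝ} (hb : DegBounds d F D K) {m : ℝ}
    (hm : m = ∑ i, (resDeg d H i : ℝ))
    (hL : (4 * (K + 1) + 24) * (D : ℝ) ^ 2 ≤ m) {u v : Fin n} (huv : F.Adj u v) (x : Fin n)
    [DecidablePred fun G : SimpleGraph (Fin n) => (G.Adj x u ∧ ¬ H.Adj x u) ∧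
      (G.Adj x v ∧ ¬ H.Adj x v)] :
    |(((graphsWith d H F).filter fun G => (G.Adj x u ∧ ¬ H.Adj x u) ∧
        (G.Adj x v ∧ ¬ H.Adj x v)).card : ℝ) -
      (graphsWith d H F).card * (resDeg d H u * resDeg d H v) / m ^ 2 *
        (resDeg d H x * (resDeg d H x - 1) : ℕ)| ≤
      (graphsWith d H F).card * (resDeg d H u * resDeg d H v) / m ^ 2 *
        (3 * ((4 * K + 18) * ((D : ℝ) ^ 2 / m)) * (resDeg d H x * (resDeg d H x - 1) : ℕ) +
        ((if x ∈ closedNbhd (H ⊔ F) u then ((resDeg d H x * (resDeg d H x - 1) : ℕ) : ℝ) else 0) +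
        (if x ∈ closedNbhd (H ⊔ F) v then ((resDeg d H x * (resDeg d H x - 1) : ℕ) : ℝ)
          else 0))) := by
  have hK := hb.nonneg
  have hm0 : 0 ≤ m := le_trans (by positivity) hL
  have hc : 0 ≤ (graphsWith d H F).card * ((resDeg d H u : ℝ) * resDeg d H v) / m ^ 2 := by
    positivity
  by_cases hx : x ∈ closedNbhd (H ⊔ F) u ∨ x ∈ closedNbhd (H ⊔ F) v
  · have h0 : ((graphsWith d H F).filter fun G => (G.Adj x u ∧ ¬ H.Adj x u) ∧
        (G.Adj x v ∧ ¬ H.Adj x v)) = ∅ := by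
      rw [Finset.filter_eq_empty_iff]
      rintro G hG ⟨h1, h2⟩
      rcases hx with hx | hx
      · exact not_adj_of_mem_closedNbhd hG hx h1.1 h1.2
      · exact not_adj_of_mem_closedNbhd hG hx h2.1 h2.2
    rw [h0, Finset.card_empty, Nat.cast_zero, zero_sub, abs_neg, abs_of_nonneg (by positivity)]
    refine mul_le_mul_of_nonneg_left ?_ hc
    have h1 : 0 ≤ 3 * ((4 * K + 18) * ((D : ℝ) ^ 2 / m)) *
      (resDeg d H x * (resDeg d H x - 1) : ℕ) := by positivity
    have h2 : (0 : ℝ) ≤ (resDeg d H x * (resDeg d H x - 1) : ℕ) := Nat.cast_nonneg _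
    split_ifs <;> first | linarith | tauto
  · rw [not_or] at hx
    rw [if_neg hx.1, if_neg hx.2]
    simp only [mem_closedNbhd, SimpleGraph.sup_adj, not_or] at hx
    obtain ⟨⟨hxu, hHu, hFu⟩, hxv, hHv, hFv⟩ := hx
    rw [H.adj_comm] at hHu hHv
    rw [F.adj_comm] at hFu hFv
    have hne := huv.ne
    have hH2 : ¬ (H ⊔ SimpleGraph.edge x u).Adj x v := by
      simp only [SimpleGraph.sup_adj, SimpleGraph.edge_adj]
      grind
    have h0 : ((graphsWith d H F).filter fun G => (G.Adj x u ∧ ¬ H.Adj x u) ∧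
        (G.Adj x v ∧ ¬ H.Adj x v)) =
        graphsWith d (H ⊔ SimpleGraph.edge x u ⊔ SimpleGraph.edge x v) F := by
      ext G
      simp only [Finset.mem_filter, mem_graphsWith_sup_edge hxu, mem_graphsWith_sup_edge hxv]
      tauto
    have h1 := abs_card_graphsWith_two_edges_sub_le hb (by linarith) hm.ge hL hxu hHu hFu
      hxv hH2 hFv
    have h2 : resDeg d (H ⊔ SimpleGraph.edge x u) x = resDeg d H x - 1 := by
      rw [resDeg_sup_edge d H hxu hHu, if_pos rfl, if_neg hxu]
    have h3 : resDeg d (H ⊔ SimpleGraph.edge x u) v = resDeg d H v := by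
      rw [resDeg_sup_edge d H hxu hHu, if_neg (Ne.symm hxv), if_neg hne.symm, add_zero,
        Nat.sub_zero]
    rw [h2, h3] at h1
    have h4 : ((resDeg d H x - 1 : ℕ) : ℝ) * resDeg d H v / m * (resDeg d H x * resDeg d H u / m) *
        (graphsWith d H F).card = (graphsWith d H F).card * (resDeg d H u * resDeg d H v) / m ^ 2 *
        (resDeg d H x * (resDeg d H x - 1) : ℕ) := by
      rw [Nat.cast_mul]
      ring
    rw [h4] at h1
    rw [h0]
    linarith

theorem mul_sub_one_le {n : ℕ} {d : Fin n → ℕ} {F : SimpleGraph (Fin n)} {D : ℕ} {K : ℝ}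
    (hb : DegBounds d F D K) (H : SimpleGraph (Fin n)) (x : Fin n) :
    ((resDeg d H x * (resDeg d H x - 1) : ℕ) : ℝ) ≤ D * resDeg d H x := by
  rw [mul_comm, Nat.cast_mul]
  refine mul_le_mul_of_nonneg_right (Nat.cast_le.2 ?_) (Nat.cast_nonneg _)
  exact (Nat.sub_le _ _).trans ((resDeg_le d H x).trans (hb.le x))

theorem mul_sub_one_le_sq {n : ℕ} {d : Fin n → ℕ} {F : SimpleGraph (Fin n)} {D : ℕ} {K : ℝ}
    (hb : DegBounds d F D K) (H : SimpleGraph (Fin n)) (x : Fin n) :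
    ((resDeg d H x * (resDeg d H x - 1) : ℕ) : ℝ) ≤ (D : ℝ) ^ 2 := by
  refine (mul_sub_one_le hb H x).trans ?_
  rw [sq]
  exact mul_le_mul_of_nonneg_left (Nat.cast_le.2 ((resDeg_le d H x).trans (hb.le x)))
    (Nat.cast_nonneg _)

theorem sum_mul_sub_one_le {n : ℕ} {d : Fin n → ℕ} {F : SimpleGraph (Fin n)} {D : ℕ} {K : ℝ}
    (hb : DegBounds d F D K) (H : SimpleGraph (Fin n)) :
    ∑ x, ((resDeg d H x * (resDeg d H x - 1) : ℕ) : ℝ) ≤ D * ∑ x, (resDeg d H x : ℝ) := by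
  rw [Finset.mul_sum]
  exact Finset.sum_le_sum fun x _ => mul_sub_one_le hb H x

theorem sum_ite_mem_le {n : ℕ} (S : Finset (Fin n)) {f : Fin n → ℝ} {c L : ℝ} (hc : 0 ≤ c)
    (hf : ∀ x, f x ≤ c) (hS : (S.card : ℝ) ≤ L) :
    ∑ x, (if x ∈ S then f x else 0) ≤ L * c := by
  rw [Finset.sum_ite_mem, Finset.univ_inter]
  have h1 := Finset.sum_le_card_nsmul S f c fun x _ => hf x
  rw [nsmul_eq_mul] at h1
  exact h1.trans (mul_le_mul_of_nonneg_right hS hc)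

theorem abs_sum_card_filter_common_sub_le {n : ℕ} {d : Fin n → ℕ}
    {H F : SimpleGraph (Fin n)} {D : ℕ} {K : ℝ} (hb : DegBounds d F D K) {m : ℝ}
    (hm : m = ∑ i, (resDeg d H i : ℝ)) (hHd : ∀ i, deg H i ≤ d i)
    (hL : (4 * (K + 1) + 24) * (D : ℝ) ^ 2 ≤ m) {u v : Fin n} (huv : F.Adj u v)
    [∀ x, DecidablePred fun G : SimpleGraph (Fin n) => (G.Adj x u ∧ ¬ H.Adj x u) ∧
      (G.Adj x v ∧ ¬ H.Adj x v)] :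
    |∑ x, (((graphsWith d H F).filter fun G => (G.Adj x u ∧ ¬ H.Adj x u) ∧
        (G.Adj x v ∧ ¬ H.Adj x v)).card : ℝ) -
      (graphsWith d H F).card * (resDeg d H u * resDeg d H v) / m ^ 2 *
        ∑ x, ((resDeg d H x * (resDeg d H x - 1) : ℕ) : ℝ)| ≤
      (graphsWith d H F).card * (resDeg d H u * resDeg d H v) / m ^ 2 *
        ((3 * (4 * K + 18) + 2 * (K + 2)) * (D : ℝ) ^ 3) := by
  have hK := hb.nonneg
  have hD : (1 : ℝ) ≤ D := by exact_mod_cast hb.one_le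
  have hmpos : 0 < m := by nlinarith [one_le_pow₀ hD (n := 2)]
  rw [Finset.mul_sum, ← Finset.sum_sub_distrib]
  refine (Finset.abs_sum_le_sum_abs _ _).trans
    ((Finset.sum_le_sum fun x _ => abs_card_filter_common_sub_le hb hm hL huv x).trans ?_)
  rw [← Finset.mul_sum, Finset.sum_add_distrib, Finset.sum_add_distrib, ← Finset.mul_sum]
  refine mul_le_mul_of_nonneg_left ?_ (by positivity)
  have h1 := sum_mul_sub_one_le hb H
  rw [← hm] at h1
  have h2 := sum_ite_mem_le (closedNbhd (H ⊔ F) u) (sq_nonneg (D : ℝ)) (mul_sub_one_le_sq hb H)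
    (hb.card_closedNbhd_le hHd u)
  have h3 := sum_ite_mem_le (closedNbhd (H ⊔ F) v) (sq_nonneg (D : ℝ)) (mul_sub_one_le_sq hb H)
    (hb.card_closedNbhd_le hHd v)
  have h4 := mul_le_mul_of_nonneg_left h1
    (show 0 ≤ 3 * ((4 * K + 18) * ((D : ℝ) ^ 2 / m)) by positivity)
  have h5 : 3 * ((4 * K + 18) * ((D : ℝ) ^ 2 / m)) * (D * m) = 3 * (4 * K + 18) * (D : ℝ) ^ 3 := by
    field_simp
  linarith

theorem abs_card_filter_path_sub_le_of_adj {n : ℕ} {d : Fin n → ℕ}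
    {H F : SimpleGraph (Fin n)} {D : ℕ} {K : ℝ} (hb : DegBounds d F D K) {m : ℝ}
    (hm : m = ∑ i, (resDeg d H i : ℝ))
    (hL : (4 * (K + 1) + 24) * (D : ℝ) ^ 2 ≤ m) {u v : Fin n} (huv : F.Adj u v) {x y : Fin n}
    (hxy : (H ⊔ F).Adj x y) (hx : x ∉ closedNbhd (H ⊔ F) u) (hy : y ∉ closedNbhd (H ⊔ F) v)
    [DecidablePred fun G : SimpleGraph (Fin n) => (G.Adj x u ∧ ¬ H.Adj x u) ∧
      (G.Adj y v ∧ ¬ H.Adj y v) ∧ (G ⊔ F).Adj x y] :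
    |(((graphsWith d H F).filter fun G => (G.Adj x u ∧ ¬ H.Adj x u) ∧
        (G.Adj y v ∧ ¬ H.Adj y v) ∧ (G ⊔ F).Adj x y).card : ℝ) -
      (graphsWith d H F).card * (resDeg d H u * resDeg d H v) / m ^ 2 *
        (resDeg d H x * resDeg d H y)| ≤
      3 * ((4 * K + 18) * ((D : ℝ) ^ 2 / m)) *
        ((graphsWith d H F).card * (resDeg d H u * resDeg d H v) / m ^ 2 *
          (resDeg d H x * resDeg d H y)) := by
  simp only [mem_closedNbhd, SimpleGraph.sup_adj, not_or] at hx hy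
  obtain ⟨hxu, hHu, hFu⟩ := hx
  obtain ⟨hyv, hHv, hFv⟩ := hy
  rw [H.adj_comm] at hHu hHv
  rw [F.adj_comm] at hFu hFv
  have hne := huv.ne
  have hxy' := hxy.ne
  have hyu : y ≠ u := fun h => hFv (h ▸ huv)
  have hH2 : ¬ (H ⊔ SimpleGraph.edge x u).Adj y v := by
    simp only [SimpleGraph.sup_adj, SimpleGraph.edge_adj]
    grind
  have h0 : ((graphsWith d H F).filter fun G => (G.Adj x u ∧ ¬ H.Adj x u) ∧
      (G.Adj y v ∧ ¬ H.Adj y v) ∧ (G ⊔ F).Adj x y) =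
      graphsWith d (H ⊔ SimpleGraph.edge x u ⊔ SimpleGraph.edge y v) F := by
    ext G
    simp only [Finset.mem_filter, mem_graphsWith_sup_edge hxu, mem_graphsWith_sup_edge hyv,
      SimpleGraph.sup_adj] at hxy ⊢
    have h := fun hG : G ∈ graphsWith d H F => (mem_graphsWith.1 hG).2.1 x y
    tauto
  have h1 := abs_card_graphsWith_two_edges_sub_le hb (by linarith) hm.ge hL hxu hHu hFu
    hyv hH2 hFv
  have h2 : resDeg d (H ⊔ SimpleGraph.edge x u) y = resDeg d H y := by
    rw [resDeg_sup_edge d H hxu hHu, if_neg hxy'.symm, if_neg hyu, add_zero, Nat.sub_zero]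
  have h3 : resDeg d (H ⊔ SimpleGraph.edge x u) v = resDeg d H v := by
    rw [resDeg_sup_edge d H hxu hHu, if_neg (by rintro rfl; exact hFu huv.symm),
      if_neg hne.symm, add_zero, Nat.sub_zero]
  rw [h2, h3] at h1
  have h4 : (resDeg d H y : ℝ) * resDeg d H v / m * (resDeg d H x * resDeg d H u / m) *
      (graphsWith d H F).card = (graphsWith d H F).card * (resDeg d H u * resDeg d H v) / m ^ 2 *
      (resDeg d H x * resDeg d H y) := by
    ring
  rwa [h0, ← h4]

theorem abs_card_filter_path_sub_le_of_not_adj {n : ℕ} {d : Fin n → ℕ}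
    {H F : SimpleGraph (Fin n)} {D : ℕ} {K : ℝ} (hb : DegBounds d F D K) {m : ℝ}
    (hm : m = ∑ i, (resDeg d H i : ℝ))
    (hL : (4 * (K + 1) + 24) * (D : ℝ) ^ 2 ≤ m) {u v : Fin n} (huv : F.Adj u v) {x y : Fin n}
    (hxy : y ∉ closedNbhd (H ⊔ F) x) (hx : x ∉ closedNbhd (H ⊔ F) u)
    (hy : y ∉ closedNbhd (H ⊔ F) v)
    [DecidablePred fun G : SimpleGraph (Fin n) => (G.Adj x u ∧ ¬ H.Adj x u) ∧
      (G.Adj y v ∧ ¬ H.Adj y v) ∧ (G ⊔ F).Adj x y] :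
    |(((graphsWith d H F).filter fun G => (G.Adj x u ∧ ¬ H.Adj x u) ∧
        (G.Adj y v ∧ ¬ H.Adj y v) ∧ (G ⊔ F).Adj x y).card : ℝ) -
      (graphsWith d H F).card * (resDeg d H u * resDeg d H v) / m ^ 3 *
        ((resDeg d H x * (resDeg d H x - 1) : ℕ) * (resDeg d H y * (resDeg d H y - 1) : ℕ))| ≤
      7 * ((4 * K + 18) * ((D : ℝ) ^ 2 / m)) *
        ((graphsWith d H F).card * (resDeg d H u * resDeg d H v) / m ^ 3 *
        ((resDeg d H x * (resDeg d H x - 1) : ℕ) * (resDeg d H y * (resDeg d H y - 1) : ℕ))) := by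
  simp only [mem_closedNbhd, SimpleGraph.sup_adj, not_or] at hx hy hxy
  obtain ⟨hxu, hHu, hFu⟩ := hx
  obtain ⟨hyv, hHv, hFv⟩ := hy
  obtain ⟨hxy', hHxy, hFxy⟩ := hxy
  rw [H.adj_comm] at hHu hHv
  rw [F.adj_comm] at hFu hFv
  have hne := huv.ne
  have hyu : y ≠ u := by rintro rfl; exact hFv huv
  have hxv : x ≠ v := by rintro rfl; exact hFu huv.symm
  have hH2 : ¬ (H ⊔ SimpleGraph.edge x u).Adj y v := by
    simp only [SimpleGraph.sup_adj, SimpleGraph.edge_adj]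
    grind
  have hH3 : ¬ (H ⊔ SimpleGraph.edge x u ⊔ SimpleGraph.edge y v).Adj x y := by
    simp only [SimpleGraph.sup_adj, SimpleGraph.edge_adj]
    grind
  have h0 : ((graphsWith d H F).filter fun G => (G.Adj x u ∧ ¬ H.Adj x u) ∧
      (G.Adj y v ∧ ¬ H.Adj y v) ∧ (G ⊔ F).Adj x y) =
      graphsWith d (H ⊔ SimpleGraph.edge x u ⊔ SimpleGraph.edge y v ⊔ SimpleGraph.edge x y)
        F := by
    ext G
    simp only [Finset.mem_filter, mem_graphsWith_sup_edge hxu, mem_graphsWith_sup_edge hyv,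
      mem_graphsWith_sup_edge (Ne.symm hxy'), SimpleGraph.sup_adj]
    tauto
  have h1 := abs_card_graphsWith_three_edges_sub_le hb hm.le hm.ge hL hxu hHu hFu
    hyv hH2 hFv (Ne.symm hxy') hH3 hFxy
  have h2 : resDeg d (H ⊔ SimpleGraph.edge x u) y = resDeg d H y := by
    rw [resDeg_sup_edge d H hxu hHu, if_neg hxy', if_neg hyu, add_zero, Nat.sub_zero]
  have h3 : resDeg d (H ⊔ SimpleGraph.edge x u) v = resDeg d H v := by
    rw [resDeg_sup_edge d H hxu hHu, if_neg hxv.symm, if_neg hne.symm, add_zero, Nat.sub_zero]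
  have h4 : resDeg d (H ⊔ SimpleGraph.edge x u ⊔ SimpleGraph.edge y v) x = resDeg d H x - 1 := by
    rw [resDeg_sup_edge d _ hyv hH2, resDeg_sup_edge d H hxu hHu, if_pos rfl, if_neg hxu,
      if_neg (Ne.symm hxy'), if_neg hxv]
    rfl
  have h5 : resDeg d (H ⊔ SimpleGraph.edge x u ⊔ SimpleGraph.edge y v) y = resDeg d H y - 1 := by
    rw [resDeg_sup_edge d _ hyv hH2, h2, if_pos rfl, if_neg hyv]
  rw [h4, h5, h2, h3] at h1
  have h6 : ((resDeg d H x - 1 : ℕ) : ℝ) * (resDeg d H y - 1 : ℕ) / m *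
      (resDeg d H y * resDeg d H v / m * (resDeg d H x * resDeg d H u / m)) *
      (graphsWith d H F).card = (graphsWith d H F).card * (resDeg d H u * resDeg d H v) / m ^ 3 *
      ((resDeg d H x * (resDeg d H x - 1) : ℕ) * (resDeg d H y * (resDeg d H y - 1) : ℕ)) := by
    rw [Nat.cast_mul, Nat.cast_mul]
    ring
  rwa [h0, ← h6]

open Classical in
theorem abs_card_filter_path_sub_le {n : ℕ} {d : Fin n → ℕ}
    {H F : SimpleGraph (Fin n)} {D : ℕ} {K : ℝ} (hb : DegBounds d F D K) {m : ℝ}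
    (hm : m = ∑ i, (resDeg d H i : ℝ))
    (hL : (4 * (K + 1) + 24) * (D : ℝ) ^ 2 ≤ m) {u v : Fin n} (huv : F.Adj u v) {r w : ℝ}
    (x y : Fin n)
    (hr : r = (graphsWith d H F).card * (resDeg d H u * resDeg d H v) / m ^ 3 *
        ((resDeg d H x * (resDeg d H x - 1) : ℕ) * (resDeg d H y * (resDeg d H y - 1) : ℕ)))
    (hw : w = (graphsWith d H F).card * (resDeg d H u * resDeg d H v) / m ^ 2 *
        (resDeg d H x * resDeg d H y)) :
    |(((graphsWith d H F).filter fun G => (G.Adj x u ∧ ¬ H.Adj x u) ∧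
        (G.Adj y v ∧ ¬ H.Adj y v) ∧ (G ⊔ F).Adj x y).card : ℝ) -
      (r + if (H ⊔ F).Adj x y ∧ x ∉ closedNbhd (H ⊔ F) u ∧ y ∉ closedNbhd (H ⊔ F) v then w
        else 0)| ≤
      7 * ((4 * K + 18) * ((D : ℝ) ^ 2 / m)) * r +
        ((if y ∈ closedNbhd (H ⊔ F) x then 3 * ((4 * K + 18) * ((D : ℝ) ^ 2 / m)) * w + r else 0) +
        ((if x ∈ closedNbhd (H ⊔ F) u then r else 0) +
        (if y ∈ closedNbhd (H ⊔ F) v then r else 0))) := by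
  have hK := hb.nonneg
  have hm0 : 0 ≤ m := le_trans (by positivity) hL
  have hr0 : 0 ≤ r := by rw [hr]; positivity
  have hw0 : 0 ≤ w := by rw [hw]; positivity
  have he1 : 0 ≤ 7 * ((4 * K + 18) * ((D : ℝ) ^ 2 / m)) * r := by positivity
  have he2 : 0 ≤ 3 * ((4 * K + 18) * ((D : ℝ) ^ 2 / m)) * w := by positivity
  by_cases hx : x ∈ closedNbhd (H ⊔ F) u ∨ y ∈ closedNbhd (H ⊔ F) v
  · have h0 : ((graphsWith d H F).filter fun G => (G.Adj x u ∧ ¬ H.Adj x u) ∧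
        (G.Adj y v ∧ ¬ H.Adj y v) ∧ (G ⊔ F).Adj x y) = ∅ := by
      rw [Finset.filter_eq_empty_iff]
      rintro G hG ⟨h1, h2, -⟩
      rcases hx with hx | hx
      · exact not_adj_of_mem_closedNbhd hG hx h1.1 h1.2
      · exact not_adj_of_mem_closedNbhd hG hx h2.1 h2.2
    rw [h0, if_neg (by tauto), Finset.card_empty, Nat.cast_zero, add_zero, zero_sub, abs_neg,
      abs_of_nonneg hr0]
    split_ifs <;> first | linarith | tauto
  rw [not_or] at hx
  rw [if_neg hx.1, if_neg hx.2, add_zero, add_zero]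
  by_cases hxy : (H ⊔ F).Adj x y
  · rw [if_pos ⟨hxy, hx⟩, if_pos (mem_closedNbhd.2 (Or.inr hxy))]
    have h1 := abs_card_filter_path_sub_le_of_adj hb hm hL huv hxy hx.1 hx.2
    rw [← hw, abs_le] at h1
    rw [abs_le]
    constructor <;> linarith [h1.1, h1.2]
  · rw [if_neg (by tauto), add_zero]
    by_cases hy : y = x
    · have h0 : ((graphsWith d H F).filter fun G => (G.Adj x u ∧ ¬ H.Adj x u) ∧
          (G.Adj y v ∧ ¬ H.Adj y v) ∧ (G ⊔ F).Adj x y) = ∅ := by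
        rw [Finset.filter_eq_empty_iff]
        rintro G - ⟨-, -, h1⟩
        exact h1.ne hy.symm
      rw [h0, Finset.card_empty, Nat.cast_zero, zero_sub, abs_neg, abs_of_nonneg hr0,
        if_pos (mem_closedNbhd.2 (Or.inl hy))]
      linarith
    · have h2 : y ∉ closedNbhd (H ⊔ F) x := by
        rw [mem_closedNbhd]
        tauto
      rw [if_neg h2, add_zero, hr]
      exact abs_card_filter_path_sub_le_of_not_adj hb hm hL huv h2 hx.1 hx.2

open Classical in
theorem abs_sum_card_filter_path_sub_le {n : ℕ} {d : Fin n → ℕ}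
    {H F : SimpleGraph (Fin n)} {D : ℕ} {K : ℝ} (hb : DegBounds d F D K) {m : ℝ}
    (hm : m = ∑ i, (resDeg d H i : ℝ)) (hHd : ∀ i, deg H i ≤ d i)
    (hL : (4 * (K + 1) + 24) * (D : ℝ) ^ 2 ≤ m) {u v : Fin n} (huv : F.Adj u v) :
    |∑ x, ∑ y, (((graphsWith d H F).filter fun G => (G.Adj x u ∧ ¬ H.Adj x u) ∧
        (G.Adj y v ∧ ¬ H.Adj y v) ∧ (G ⊔ F).Adj x y).card : ℝ) -
      ((graphsWith d H F).card * (resDeg d H u * resDeg d H v) / m ^ 3 *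
        (∑ x, ((resDeg d H x * (resDeg d H x - 1) : ℕ) : ℝ)) ^ 2 +
      ∑ x, ∑ y, if (H ⊔ F).Adj x y ∧ x ∉ closedNbhd (H ⊔ F) u ∧ y ∉ closedNbhd (H ⊔ F) v then
        (graphsWith d H F).card * (resDeg d H u * resDeg d H v) / m ^ 2 *
        ((resDeg d H x : ℝ) * resDeg d H y) else 0)| ≤
      (graphsWith d H F).card * (resDeg d H u * resDeg d H v) / m ^ 2 *
        ((3 * (4 * K + 18) * (K + 2) + 7 * (4 * K + 18) + 3 * (K + 2)) * (D : ℝ) ^ 4) := by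
  have hK := hb.nonneg
  have hD : (1 : ℝ) ≤ D := by exact_mod_cast hb.one_le
  have hmpos : 0 < m := by nlinarith [one_le_pow₀ hD (n := 2)]
  set s : Fin n → ℝ := fun x => ((resDeg d H x * (resDeg d H x - 1) : ℕ) : ℝ) with hs
  set t : Fin n → ℝ := fun x => (resDeg d H x : ℝ) with ht
  set c : ℝ := (graphsWith d H F).card * (resDeg d H u * resDeg d H v) with hc
  have hc0 : 0 ≤ c := by positivity
  have hs0 : ∀ x, 0 ≤ s x := fun x => Nat.cast_nonneg _
  have ht0 : ∀ x, 0 ≤ t x := fun x => Nat.cast_nonneg _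
  have htD : ∀ x, t x ≤ D := fun x => Nat.cast_le.2 ((resDeg_le d H x).trans (hb.le x))
  have hsD : ∀ x, s x ≤ (D : ℝ) ^ 2 := mul_sub_one_le_sq hb H
  have hsum : ∑ x, s x ≤ D * m := hm ▸ sum_mul_sub_one_le hb H
  have hsum0 : 0 ≤ ∑ x, s x := Finset.sum_nonneg fun x _ => hs0 x
  have hN := fun x => hb.card_closedNbhd_le hHd x
  set e := (4 * K + 18) * ((D : ℝ) ^ 2 / m) with he
  have he0 : 0 ≤ e := by positivity
  have hsq : (∑ x, s x) ^ 2 = ∑ x, ∑ y, s x * s y := by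
    rw [sq, Finset.sum_mul_sum]
  have key : ∀ x y : Fin n, _ := fun x y => abs_card_filter_path_sub_le hb hm hL huv x y rfl rfl
  rw [hsq, Finset.mul_sum]
  simp only [Finset.mul_sum, ← Finset.sum_add_distrib]
  simp only [← Finset.sum_sub_distrib]
  refine (Finset.abs_sum_le_sum_abs _ _).trans ((Finset.sum_le_sum fun x _ =>
    (Finset.abs_sum_le_sum_abs _ _).trans (Finset.sum_le_sum fun y _ => key x y)).trans ?_)
  simp only [Finset.sum_add_distrib]
  have e1 : ∑ x, ∑ y, 7 * e * (c / m ^ 3 * (s x * s y)) ≤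
      7 * e * (c / m ^ 3 * ((D * m) * (D * m))) := by
    simp only [← Finset.mul_sum]
    rw [← Finset.sum_mul]
    refine mul_le_mul_of_nonneg_left (mul_le_mul_of_nonneg_left ?_ (by positivity)) (by positivity)
    exact mul_le_mul hsum hsum hsum0 (by positivity)
  have e2 : ∑ x, ∑ y, (if y ∈ closedNbhd (H ⊔ F) x then
      3 * e * (c / m ^ 2 * (t x * t y)) + c / m ^ 3 * (s x * s y) else 0) ≤
      3 * e * (c / m ^ 2 * ((K + 2) * D * D * m)) +
        c / m ^ 3 * ((K + 2) * D * (D : ℝ) ^ 2 * (D * m)) := by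
    simp only [Finset.sum_ite_mem, Finset.univ_inter, Finset.sum_add_distrib, ← Finset.mul_sum]
    refine add_le_add (mul_le_mul_of_nonneg_left (mul_le_mul_of_nonneg_left ?_ (by positivity))
      (by positivity)) (mul_le_mul_of_nonneg_left ?_ (by positivity))
    · have := sum_sum_mul_le (closedNbhd (H ⊔ F)) ht0 (Nat.cast_nonneg D) htD hN
      simp only [← Finset.mul_sum] at this
      exact this.trans (by rw [hm])
    · have := sum_sum_mul_le (closedNbhd (H ⊔ F)) hs0 (sq_nonneg (D : ℝ)) hsD hN
      simp only [← Finset.mul_sum] at this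
      exact this.trans (mul_le_mul_of_nonneg_left hsum (by positivity))
  have e3 : ∑ x, ∑ y, (if x ∈ closedNbhd (H ⊔ F) u then c / m ^ 3 * (s x * s y) else 0) ≤
      c / m ^ 3 * ((K + 2) * D * (D : ℝ) ^ 2 * (D * m)) := by
    rw [Finset.sum_comm]
    simp only [Finset.sum_ite_mem, Finset.univ_inter, ← Finset.mul_sum, mul_comm (s _) (s _)]
    refine mul_le_mul_of_nonneg_left ?_ (by positivity)
    have := sum_sum_mul_le (fun _ => closedNbhd (H ⊔ F) u) hs0 (sq_nonneg (D : ℝ)) hsD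
      (fun _ => hN u)
    simp only [← Finset.mul_sum] at this
    exact this.trans (mul_le_mul_of_nonneg_left hsum (by positivity))
  have e4 : ∑ x, ∑ y, (if y ∈ closedNbhd (H ⊔ F) v then c / m ^ 3 * (s x * s y) else 0) ≤
      c / m ^ 3 * ((K + 2) * D * (D : ℝ) ^ 2 * (D * m)) := by
    simp only [Finset.sum_ite_mem, Finset.univ_inter, ← Finset.mul_sum]
    refine mul_le_mul_of_nonneg_left ?_ (by positivity)
    have := sum_sum_mul_le (fun _ => closedNbhd (H ⊔ F) v) hs0 (sq_nonneg (D : ℝ)) hsD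
      (fun _ => hN v)
    simp only [← Finset.mul_sum] at this
    exact this.trans (mul_le_mul_of_nonneg_left hsum (by positivity))
  have e5 : 7 * e * (c / m ^ 3 * ((D * m) * (D * m))) + (3 * e * (c / m ^ 2 *
      ((K + 2) * D * D * m)) + c / m ^ 3 * ((K + 2) * D * (D : ℝ) ^ 2 * (D * m)) +
      (c / m ^ 3 * ((K + 2) * D * (D : ℝ) ^ 2 * (D * m)) +
      c / m ^ 3 * ((K + 2) * D * (D : ℝ) ^ 2 * (D * m)))) =
      c / m ^ 2 * ((3 * (4 * K + 18) * (K + 2) + 7 * (4 * K + 18) + 3 * (K + 2)) *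
        (D : ℝ) ^ 4) := by
    rw [he]
    field_simp
    ring
  rw [← e5]
  exact add_le_add e1 (add_le_add e2 (add_le_add e3 e4))

theorem expect_eq_sum_div {n : ℕ} {base : SimpleGraph (Fin n) → Prop}
    {A : Finset (SimpleGraph (Fin n))} (hA : ∀ G, G ∈ A ↔ base G)
    (X : SimpleGraph (Fin n) → ℝ) : expect base X = (∑ G ∈ A, X G) / A.card := by
  have h : {G : SimpleGraph (Fin n) | base G} = (A : Set (SimpleGraph (Fin n))) := by
    ext G
    exact (hA G).symm
  rw [expect, h, finsum_mem_coe_finset, Nat.subtype_card A hA]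

theorem expect_eq_zero {n : ℕ} {base : SimpleGraph (Fin n) → Prop}
    {X : SimpleGraph (Fin n) → ℝ} (hX : ∀ G, base G → X G = 0) : expect base X = 0 := by
  have h : ∑ᶠ G ∈ {G : SimpleGraph (Fin n) | base G}, X G = 0 :=
    finsum_mem_eq_zero_of_forall_eq_zero fun G hG => hX G hG
  rw [expect, h, zero_div]

open Classical in
theorem sum_Y2 {n : ℕ} (H₁ : SimpleGraph (Fin n)) (u v : Fin n)
    (A : Finset (SimpleGraph (Fin n))) :
    ∑ G ∈ A, (Y2 H₁ u v G : ℝ) = ∑ x, ((A.filter fun G => (G.Adj x u ∧ ¬ H₁.Adj x u) ∧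
      (G.Adj x v ∧ ¬ H₁.Adj x v)).card : ℝ) := by
  have h : ∀ G, Y2 H₁ u v G = (Finset.univ.filter fun x => (G.Adj x u ∧ ¬ H₁.Adj x u) ∧
      (G.Adj x v ∧ ¬ H₁.Adj x v)).card := fun G => by
    rw [Y2]
    refine Nat.subtype_card _ fun x => ?_
    simp only [Finset.mem_filter, Finset.mem_univ, true_and]
    tauto
  simp only [h, Finset.card_filter, Nat.cast_sum]
  exact Finset.sum_comm

open Classical in
theorem sum_Y1 {n : ℕ} (d : Fin n → ℕ) (H₁ H₂ : SimpleGraph (Fin n)) (u v : Fin n) :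
    ∑ G ∈ graphsWith d H₁ (H₂ ⊔ SimpleGraph.edge u v), (Y1 H₁ H₂ u v G : ℝ) =
      ∑ x, ∑ y, (((graphsWith d H₁ (H₂ ⊔ SimpleGraph.edge u v)).filter fun G =>
        (G.Adj x u ∧ ¬ H₁.Adj x u) ∧ (G.Adj y v ∧ ¬ H₁.Adj y v) ∧
        (G ⊔ (H₂ ⊔ SimpleGraph.edge u v)).Adj x y).card : ℝ) := by
  have h : ∀ G ∈ graphsWith d H₁ (H₂ ⊔ SimpleGraph.edge u v), Y1 H₁ H₂ u v G =
      (Finset.univ.filter fun p : Fin n × Fin n =>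
        (G.Adj p.1 u ∧ ¬ H₁.Adj p.1 u) ∧ (G.Adj p.2 v ∧ ¬ H₁.Adj p.2 v) ∧
        (G ⊔ (H₂ ⊔ SimpleGraph.edge u v)).Adj p.1 p.2).card := fun G hG => by
    rw [Y1]
    refine Nat.subtype_card _ fun p => ?_
    simp only [Finset.mem_filter, Finset.mem_univ, true_and, SimpleGraph.sup_adj,
      SimpleGraph.edge_adj]
    have h1 := (mem_graphsWith.1 hG).2.2 v u
    simp only [SimpleGraph.sup_adj, SimpleGraph.edge_adj] at h1
    have h2 : ¬ G.Adj u u := G.irrefl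
    grind
  rw [Finset.sum_congr rfl fun G hG => by rw [h G hG]]
  simp only [Finset.card_filter, Nat.cast_sum, Fintype.sum_prod_type]
  rw [Finset.sum_comm]
  exact Finset.sum_congr rfl fun x _ => Finset.sum_comm

open Classical in
theorem finsum_mem_pairs {n : ℕ} (W : Set (Fin n × Fin n)) (f : Fin n × Fin n → ℝ) :
    ∑ᶠ p ∈ W, f p = ∑ x, ∑ y, if (x, y) ∈ W then f (x, y) else 0 := by
  rw [← Fintype.sum_prod_type (f := fun p => if p ∈ W then f p else 0), ← Finset.sum_filter]
  rw [← finsum_mem_coe_finset]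
  simp

theorem abs_div_sub_le {S N X e : ℝ} (hN : 0 < N) (h : |S - N * X| ≤ N * e) :
    |S / N - X| ≤ e := by
  have h1 : S / N - X = (S - N * X) / N := by field_simp
  rw [h1, abs_div, abs_of_pos hN, div_le_iff₀ hN, mul_comm e]
  exact h

theorem div_sq_mul_le {a m M c C D : ℝ} {k : ℕ} (ha : 0 ≤ a) (hc : 0 < c) (hM : 0 < M)
    (hm : c * M ≤ m) (hC : 0 ≤ C) (hD : 0 ≤ D) :
    a / m ^ 2 * (C * D ^ k) ≤ C / c ^ 2 * (a * D ^ k / M ^ 2) := by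
  have h1 : C / c ^ 2 * (a * D ^ k / M ^ 2) = a / (c * M) ^ 2 * (C * D ^ k) := by
    field_simp
  rw [h1]
  gcongr

theorem pow_four_div_sq_le {D n M : ℝ} (hM : 0 < M) (h : M ≤ n * D) :
    D ^ 4 / M ^ 2 ≤ D ^ 5 * n / M ^ 3 := by
  rw [div_le_div_iff₀ (by positivity) (by positivity)]
  have := mul_le_mul_of_nonneg_left h (show 0 ≤ D ^ 4 * M ^ 2 by positivity)
  linarith

/-- Estimates on the expected numbers of backward switchings. -/
theorem stmt16 (K c : ℝ) (hK : 1 ≤ K) (hc : 0 < c) :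
    ∃ C δ : ℝ, 0 < C ∧ 0 < δ ∧
      ∀ (n : ℕ) (d : Fin n → ℕ) (M Δ : ℕ),
        M = ∑ i, d i → Δ = Finset.univ.sup d →
        Even M → (Δ : ℝ) ^ 2 ≤ δ * M →
        ∀ H₁ H₂ : SimpleGraph (Fin n),
        Disjoint H₁.edgeSet H₂.edgeSet →
        (∀ i, deg H₁ i ≤ d i) →
        (maxDeg H₂ : ℝ) ≤ K * Δ →
        ∀ dt : Fin n → ℕ, (∀ i, dt i = d i - deg H₁ i) →
        ∀ Mt Mt2 : ℕ, Mt = ∑ i, dt i → Mt2 = ∑ i, dt i * (dt i - 1) →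
        c * M ≤ (Mt : ℝ) →
        ∀ u v : Fin n, u ≠ v → ¬ (H₁ ⊔ H₂).Adj u v →
        ∀ W : Set (Fin n × Fin n),
        W = {p : Fin n × Fin n | (H₁ ⊔ H₂).Adj p.1 p.2 ∧ ¬ (H₁ ⊔ H₂).Adj p.1 u ∧
              ¬ (H₁ ⊔ H₂).Adj p.2 v ∧ p.1 ≠ u ∧ p.1 ≠ v ∧ p.2 ≠ u ∧ p.2 ≠ v} →
        ∀ baseMinus : SimpleGraph (Fin n) → Prop,
        baseMinus = (fun G => (∀ i, deg G i = d i) ∧ H₁ ≤ G ∧ ¬ G.Adj u v ∧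
          Disjoint G.edgeSet H₂.edgeSet) →
        (∃ G, baseMinus G) →
        |expect baseMinus (fun G => (Y1 H₁ H₂ u v G : ℝ))
            - ((dt u : ℝ) * (dt v : ℝ) * (Mt2 : ℝ) ^ 2 / (Mt : ℝ) ^ 3
              + ∑ᶠ p ∈ W, (dt p.1 : ℝ) * (dt p.2 : ℝ) * (dt u : ℝ) * (dt v : ℝ) / (Mt : ℝ) ^ 2)|
          ≤ C * (dt u : ℝ) * (dt v : ℝ) * (Δ : ℝ) ^ 5 * n / (M : ℝ) ^ 3 ∧
        |expect baseMinus (fun G => (Y2 H₁ u v G : ℝ))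
            - (dt u : ℝ) * (dt v : ℝ) * (Mt2 : ℝ) / (Mt : ℝ) ^ 2|
          ≤ C * (dt u : ℝ) * (dt v : ℝ) * (Δ : ℝ) ^ 3 / (M : ℝ) ^ 2 := by
  have hK0 : (0 : ℝ) ≤ K := by linarith
  set C₁ : ℝ := 3 * (4 * (K + 1) + 18) * ((K + 1) + 2) + 7 * (4 * (K + 1) + 18) +
    3 * ((K + 1) + 2) with hC₁
  set C₂ : ℝ := 3 * (4 * (K + 1) + 18) + 2 * ((K + 1) + 2) with hC₂
  have hC₁0 : 0 < C₁ := by positivity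
  have hC₂0 : 0 < C₂ := by positivity
  refine ⟨(C₁ + C₂) / c ^ 2, c / (4 * ((K + 1) + 1) + 24), by positivity, by positivity, ?_⟩
  intro n d M Δ hM hΔ _ hδ H₁ H₂ _ hH₁ hH₂ dt hdt Mt Mt2 hMt hMt2 hcM u v huv huvB W hW base
    hbase hne
  have hdΔ : ∀ i, d i ≤ Δ := fun i => hΔ ▸ Finset.le_sup (Finset.mem_univ i)
  rcases Nat.eq_zero_or_pos Δ with h0 | hpos
  · have hdt0 : ∀ i, dt i = 0 := fun i => by
      have := hdΔ i
      rw [hdt]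
      omega
    have hadj : ∀ G, base G → ∀ x, ¬ G.Adj x u := fun G hG x hx => by
      classical
      rw [hbase] at hG
      have h1 := hG.1 u
      have h2 : d u = 0 := Nat.le_zero.1 ((hdΔ u).trans h0.le)
      rw [deg_eq_card, h2, Finset.card_eq_zero,
        Finset.filter_eq_empty_iff] at h1
      exact h1 (Finset.mem_univ x) hx.symm
    have hY2 : ∀ G, base G → (Y2 H₁ u v G : ℝ) = 0 := fun G hG => by
      have : IsEmpty {x : Fin n // G.Adj x u ∧ ¬ H₁.Adj x u ∧ G.Adj x v ∧ ¬ H₁.Adj x v} :=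
        ⟨fun x => hadj G hG x.1 x.2.1⟩
      rw [Y2, Nat.card_of_isEmpty, Nat.cast_zero]
    have hY1 : ∀ G, base G → (Y1 H₁ H₂ u v G : ℝ) = 0 := fun G hG => by
      have : IsEmpty {p : Fin n × Fin n // G.Adj p.1 u ∧ ¬ H₁.Adj p.1 u ∧
          G.Adj p.2 v ∧ ¬ H₁.Adj p.2 v ∧ (G ⊔ H₂).Adj p.1 p.2} :=
        ⟨fun p => hadj G hG p.1.1 p.2.1⟩
      rw [Y1, Nat.card_of_isEmpty, Nat.cast_zero]
    rw [expect_eq_zero hY1, expect_eq_zero hY2]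
    simp [hdt0]
  have hΔ1 : (1 : ℝ) ≤ Δ := by exact_mod_cast hpos
  have hb₀ : DegBounds d H₂ Δ K := by
    refine ⟨hpos, hK0, hdΔ, fun i => le_trans ?_ hH₂⟩
    exact_mod_cast Finset.le_sup (f := deg H₂) (Finset.mem_univ i)
  have huv₁ : ¬ H₁.Adj u v := fun h => huvB (Or.inl h)
  have huv₂ : ¬ H₂.Adj u v := fun h => huvB (Or.inr h)
  have hb := hb₀.sup_edge huv huv₂
  have hF : (H₂ ⊔ SimpleGraph.edge u v).Adj u v := by
    simp [SimpleGraph.edge_adj, huv]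
  have hdt' : dt = resDeg d H₁ := funext hdt
  subst hdt'
  have hm : (Mt : ℝ) = ∑ i, (resDeg d H₁ i : ℝ) := by rw [hMt, Nat.cast_sum]
  have hm2 : (Mt2 : ℝ) = ∑ i, ((resDeg d H₁ i * (resDeg d H₁ i - 1) : ℕ) : ℝ) := by
    rw [hMt2, Nat.cast_sum]
  have hMpos : (0 : ℝ) < M := by
    have h1 : (0 : ℝ) < Δ ^ 2 := by positivity
    exact pos_of_mul_pos_right (h1.trans_le hδ) (by positivity)
  have hL : (4 * ((K + 1) + 1) + 24) * (Δ : ℝ) ^ 2 ≤ Mt := by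
    refine le_trans ?_ hcM
    rw [div_mul_eq_mul_div, le_div_iff₀ (by positivity)] at hδ
    linarith
  have hMtpos : (0 : ℝ) < Mt := lt_of_lt_of_le (by positivity) hcM
  have hMn : (M : ℝ) ≤ n * Δ := by
    have h1 : M ≤ n * Δ := by
      rw [hM]
      refine (Finset.sum_le_card_nsmul _ _ Δ fun i _ => hdΔ i).trans ?_
      simp
    exact_mod_cast h1
  have hA : ∀ G, G ∈ graphsWith d H₁ (H₂ ⊔ SimpleGraph.edge u v) ↔ base G := fun G => by
    rw [mem_graphsWith_avoid_edge huv, mem_graphsWith, hbase]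
    have h1 : Disjoint G.edgeSet H₂.edgeSet ↔ ∀ p q, G.Adj p q → ¬ H₂.Adj p q := by
      rw [Set.disjoint_left]
      exact ⟨fun h p q hG => h (a := s(p, q)) hG, fun h e => Sym2.ind h e⟩
    have h2 : H₁ ≤ G ↔ ∀ p q, H₁.Adj p q → G.Adj p q :=
      ⟨fun h p q hp => h hp, fun h p q hp => h p q hp⟩
    beta_reduce
    rw [h1, h2]
    tauto
  have hN : (0 : ℝ) < (graphsWith d H₁ (H₂ ⊔ SimpleGraph.edge u v)).card := by
    obtain ⟨G, hG⟩ := hne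
    exact_mod_cast Finset.card_pos.2 ⟨G, (hA G).2 hG⟩
  rw [expect_eq_sum_div hA, expect_eq_sum_div hA, sum_Y1, sum_Y2]
  have ha : (0 : ℝ) ≤ resDeg d H₁ u * resDeg d H₁ v := by positivity
  constructor
  · classical
    have h1 := abs_sum_card_filter_path_sub_le hb hm hH₁ hL hF
    refine (abs_div_sub_le (e := (resDeg d H₁ u * resDeg d H₁ v : ℝ) / Mt ^ 2 * (C₁ * Δ ^ 4))
      hN ?_).trans ?_
    · refine Eq.trans_le ?_ (h1.trans_eq (by ring))
      congr 2
      · congr!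
      · rw [finsum_mem_pairs, mul_add]
        congr 1
        · rw [hm2]
          ring
        · simp only [Finset.mul_sum]
          refine Finset.sum_congr rfl fun x _ => Finset.sum_congr rfl fun y _ => ?_
          have h2 : (x, y) ∈ W ↔ (H₁ ⊔ (H₂ ⊔ SimpleGraph.edge u v)).Adj x y ∧
              x ∉ closedNbhd (H₁ ⊔ (H₂ ⊔ SimpleGraph.edge u v)) u ∧
              y ∉ closedNbhd (H₁ ⊔ (H₂ ⊔ SimpleGraph.edge u v)) v := by
            rw [hW]
            simp only [Set.mem_ofPred_eq, mem_closedNbhd, SimpleGraph.sup_adj,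
              SimpleGraph.edge_adj, H₁.adj_comm u, H₁.adj_comm v, H₂.adj_comm u, H₂.adj_comm v]
            grind
          simp only [h2]
          split_ifs
          · ring
          · rw [mul_zero]
    · refine (div_sq_mul_le ha hc hMpos hcM hC₁0.le (by positivity)).trans ?_
      have h3 := mul_le_mul_of_nonneg_left (pow_four_div_sq_le hMpos hMn) ha
      have h4 : C₁ / c ^ 2 ≤ (C₁ + C₂) / c ^ 2 := by gcongr; linarith
      have h5 : 0 ≤ (Δ : ℝ) ^ 5 * n / M ^ 3 := by positivity
      calc _ = C₁ / c ^ 2 * (resDeg d H₁ u * resDeg d H₁ v * ((Δ : ℝ) ^ 4 / M ^ 2)) := by ring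
        _ ≤ (C₁ + C₂) / c ^ 2 * (resDeg d H₁ u * resDeg d H₁ v * ((Δ : ℝ) ^ 5 * n / M ^ 3)) := by
          gcongr
        _ = _ := by ring
  · classical
    have h1 := abs_sum_card_filter_common_sub_le hb hm hH₁ hL hF
    refine (abs_div_sub_le (e := (resDeg d H₁ u * resDeg d H₁ v : ℝ) / Mt ^ 2 * (C₂ * Δ ^ 3))
      hN ?_).trans ?_
    · refine Eq.trans_le ?_ (h1.trans_eq (by ring))
      congr 2
      rw [hm2]
      ring
    · refine (div_sq_mul_le ha hc hMpos hcM hC₂0.le (by positivity)).trans ?_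
      have h4 : C₂ / c ^ 2 ≤ (C₁ + C₂) / c ^ 2 := by gcongr; linarith
      calc _ ≤ (C₁ + C₂) / c ^ 2 * (resDeg d H₁ u * resDeg d H₁ v * (Δ : ℝ) ^ 3 / M ^ 2) := by
            gcongr
        _ = _ := by ring
end
end

section
/- For every constant c > 0 the following holds. Let d = d(n) be a sequence of positive integers with d(n) → ∞ and d(n)/√n → 0. For each n let 𝒯(n) be the set of triangles in K_n. For an ordered k-tuple (T₁,…,T_k) of triangles and a vertex v ∈ [n], let h(v) be the number of indices i such that v is incident to an edge of T_i, and let h_j = |{v : h(v) = j}|. Let ℱ₁(k) be the set of k-tuples of pairwise distinct, pairwise edge-disjoint triangles, and let ℬ(k) be the set of k-tuples of triangles with h_j > 0 for some j ≥ 4 or h_j ≥ d²/√n for some j ∈ {2,3}. Then, uniformly over integers 1 ≤ k ≤ c·d^{3/2}: |ℱ₁(k) \ ℬ(k)| / ((n)₃/6)^k → 1 and |ℱ₁(k) ∩ ℬ(k)| / ((n)₃/6)^k → 0 as n → ∞; that is, sup over 1 ≤ k ≤ c·d^{3/2} of ||ℱ₁(k)\ℬ(k)|/((n)₃/6)^k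 − 1| and of |ℱ₁(k)∩ℬ(k)|/((n)₃/6)^k both tend to 0. -/
open Filter

noncomputable section

/-- `h(v)`: the number of indices `i` such that the vertex `v` is incident to an edge of the
triangle `T i` (equivalently, `v` lies in the vertex set `T i`). -/
def hitCount {n k : ℕ} (T : Fin k → Finset (Fin n)) (v : Fin n) : ℕ :=
  Nat.card {i : Fin k // v ∈ T i}

/-- `h_j`: the number of vertices `v` with `h(v) = j`. -/
def levelCount {n k : ℕ} (T : Fin k → Finset (Fin n)) (j : ℕ) : ℕ :=
  Nat.card {v : Fin n // hitCount T v = j}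

/-- `ℱ₁(k)`: tuples of pairwise distinct, pairwise edge-disjoint triangles (triangles are
recorded by their 3-element vertex sets; sharing an edge means sharing two vertices). -/
def F1 (n k : ℕ) : Set (Fin k → Finset (Fin n)) :=
  {T | (∀ i, (T i).card = 3) ∧ Function.Injective T ∧
    ∀ i j, i ≠ j → (T i ∩ T j).card ≤ 1}

/-- `ℬ(k)`: tuples of triangles with `h_j > 0` for some `j ≥ 4`, or `h_j ≥ d²/√n` for some
`j ∈ {2,3}`. -/
def B (n dv k : ℕ) : Set (Fin k → Finset (Fin n)) :=
  {T | (∀ i, (T i).card = 3) ∧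
    ((∃ j, 4 ≤ j ∧ 0 < levelCount T j) ∨
      (∃ j, (j = 2 ∨ j = 3) ∧ (dv : ℝ) ^ 2 / Real.sqrt n ≤ (levelCount T j : ℝ)))}

/-- The `k`-tuples of triangles in `K_n`. -/
def triangleTuples (n k : ℕ) : Finset (Fin k → Finset (Fin n)) :=
  Fintype.piFinset fun _ => Finset.univ.powersetCard 3

lemma mem_triangleTuples {n k : ℕ} {T : Fin k → Finset (Fin n)} :
    T ∈ triangleTuples n k ↔ ∀ i, (T i).card = 3 := by
  simp [triangleTuples, Fintype.mem_piFinset, Finset.mem_powersetCard]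

lemma card_triangleTuples (n k : ℕ) : (triangleTuples n k).card = n.choose 3 ^ k := by
  simp [triangleTuples]

lemma card_filter_forall_mem_piFinset {α : Type*} [DecidableEq α] {k : ℕ} (S : Finset α)
    (p : α → Prop) [DecidablePred p] (I : Finset (Fin k)) :
    ((Fintype.piFinset fun _ : Fin k => S).filter fun T => ∀ i ∈ I, p (T i)).card
      = (S.filter p).card ^ I.card * S.card ^ (k - I.card) := by
  have h : ((Fintype.piFinset fun _ : Fin k => S).filter fun T => ∀ i ∈ I, p (T i))
      = Fintype.piFinset fun i => if i ∈ I then S.filter p else S := by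
    ext T
    simp only [Finset.mem_filter, Fintype.mem_piFinset]
    constructor
    · rintro ⟨h1, h2⟩ i
      split_ifs with hi
      · exact Finset.mem_filter.2 ⟨h1 i, h2 i hi⟩
      · exact h1 i
    · intro h
      refine ⟨fun i => ?_, fun i hi => ?_⟩
      · have := h i
        split_ifs at this
        · exact (Finset.mem_filter.1 this).1
        · exact this
      · have := h i
        rw [if_pos hi] at this
        exact (Finset.mem_filter.1 this).2
  rw [h, Fintype.card_piFinset]
  simp only [apply_ite Finset.card]
  rw [Finset.prod_ite, Finset.prod_const, Finset.prod_const]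
  congr 2
  · simp
  · rw [Finset.filter_not, Finset.card_sdiff_of_subset (Finset.filter_subset _ _)]
    simp

/-- The factorial moments of the number of coordinates of a tuple that satisfy `p`. -/
lemma sum_choose_card_filter {α : Type*} [DecidableEq α] {k : ℕ} (S : Finset α)
    (p : α → Prop) [DecidablePred p] (m : ℕ) :
    ∑ T ∈ Fintype.piFinset fun _ : Fin k => S,
        (Finset.univ.filter fun i => p (T i)).card.choose m
      = k.choose m * ((S.filter p).card ^ m * S.card ^ (k - m)) := by
  have h (T : Fin k → α) : (Finset.univ.filter fun i => p (T i)).card.choose m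
      = ∑ I ∈ Finset.univ.powersetCard m, if ∀ i ∈ I, p (T i) then 1 else 0 := by
    rw [← Finset.card_powersetCard, ← Finset.card_filter]
    congr 1
    ext I
    simp only [Finset.mem_powersetCard, Finset.mem_filter, true_and,
      Finset.subset_iff, Finset.mem_univ]
    tauto
  simp only [h]
  rw [Finset.sum_comm]
  simp only [← Finset.card_filter, card_filter_forall_mem_piFinset]
  rw [Finset.sum_congr rfl (g := fun _ => (S.filter p).card ^ m * S.card ^ (k - m))]
  · simp
  · intro I hI
    rw [(Finset.mem_powersetCard.1 hI).2]

lemma sum_choose_card_filter_le {α : Type*} [DecidableEq α] {k : ℕ} (S : Finset α)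
    (p : α → Prop) [DecidablePred p] (m : ℕ) (q : ℝ) (hq : 0 ≤ q)
    (h : ((S.filter p).card : ℝ) ≤ q * S.card) :
    ∑ T ∈ Fintype.piFinset fun _ : Fin k => S,
        ((Finset.univ.filter fun i => p (T i)).card.choose m : ℝ)
      ≤ (k * q) ^ m * (S.card : ℝ) ^ k := by
  rw [← Nat.cast_sum, sum_choose_card_filter]
  rcases lt_or_ge k m with hkm | hkm
  · rw [Nat.choose_eq_zero_of_lt hkm]
    simp only [zero_mul, Nat.cast_zero]
    positivity
  · push_cast
    calc (k.choose m : ℝ) * (((S.filter p).card : ℝ) ^ m * (S.card : ℝ) ^ (k - m))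
        ≤ (k : ℝ) ^ m * ((q * S.card) ^ m * (S.card : ℝ) ^ (k - m)) := by
          gcongr
          exact_mod_cast Nat.choose_le_pow k m
      _ = (k * q) ^ m * ((S.card : ℝ) ^ m * (S.card : ℝ) ^ (k - m)) := by ring
      _ = _ := by rw [← pow_add, Nat.add_sub_cancel' hkm]

lemma card_filter_subset_powersetCard_le {n r : ℕ} (U : Finset (Fin n)) :
    ((Finset.univ.powersetCard r).filter fun s => U ⊆ s).card
      ≤ (n - U.card).choose (r - U.card) := by
  have h : (Finset.univ \ U : Finset (Fin n)).card = n - U.card := by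
    rw [Finset.card_sdiff_of_subset (Finset.subset_univ U)]
    simp
  rw [← h, ← Finset.card_powersetCard]
  refine Finset.card_le_card_of_injOn (fun s => s \ U) ?_ ?_
  · intro s hs
    simp only [Finset.coe_filter, Set.mem_ofPred_eq, Finset.mem_powersetCard] at hs
    simp only [Finset.mem_coe, Finset.mem_powersetCard]
    exact ⟨Finset.sdiff_subset_sdiff (Finset.subset_univ s) le_rfl, by
      rw [Finset.card_sdiff_of_subset hs.2, hs.1.2]⟩
  · intro s hs t ht hst
    simp only [Finset.coe_filter, Set.mem_ofPred_eq] at hs ht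
    rw [← Finset.sdiff_union_of_subset hs.2, ← Finset.sdiff_union_of_subset ht.2]
    exact congrArg (· ∪ U) hst

lemma card_triangles_containing_vertex_le {n : ℕ} (hn : 3 ≤ n) (v : Fin n) :
    (((Finset.univ.powersetCard 3).filter fun s : Finset (Fin n) => v ∈ s).card : ℝ)
      ≤ 3 / n * (Finset.univ.powersetCard 3 : Finset (Finset (Fin n))).card := by
  have h := card_filter_subset_powersetCard_le (r := 3) {v}
  simp only [Finset.singleton_subset_iff, Finset.card_singleton] at h
  obtain ⟨m, rfl⟩ := Nat.exists_eq_add_of_le' hn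
  have e := Nat.add_one_mul_choose_eq (m + 2) 2
  rw [Finset.card_powersetCard, Finset.card_univ, Fintype.card_fin, div_mul_eq_mul_div,
    le_div_iff₀ (by positivity)]
  norm_cast
  calc _ ≤ (m + 2).choose 2 * (m + 3) := by gcongr; exact h
    _ = _ := by linarith

lemma card_triangles_containing_pair_le {n : ℕ} (hn : 3 ≤ n) {u v : Fin n} (huv : u ≠ v) :
    (((Finset.univ.powersetCard 3).filter fun s : Finset (Fin n) => {u, v} ⊆ s).card : ℝ)
      ≤ 6 / (n * (n - 1)) * (Finset.univ.powersetCard 3 : Finset (Finset (Fin n))).card := by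
  have h := card_filter_subset_powersetCard_le (r := 3) {u, v}
  rw [Finset.card_pair huv] at h
  obtain ⟨m, rfl⟩ := Nat.exists_eq_add_of_le' hn
  have e := Nat.add_one_mul_choose_eq (m + 2) 2
  have e' := Nat.add_one_mul_choose_eq (m + 1) 1
  have hm : ((m + 3 : ℕ) : ℝ) - 1 = (m + 2 : ℕ) := by push_cast; ring
  rw [Finset.card_powersetCard, Finset.card_univ, Fintype.card_fin, div_mul_eq_mul_div, hm,
    le_div_iff₀ (by positivity)]
  norm_cast
  simp only [Nat.choose_one_right] at e'
  calc _ ≤ (m + 1).choose 1 * ((m + 3) * (m + 2)) := by gcongr; exact h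
    _ = _ := by rw [Nat.choose_one_right]; nlinarith

lemma hitCount_eq_card_filter {n k : ℕ} (T : Fin k → Finset (Fin n)) (v : Fin n) :
    hitCount T v = (Finset.univ.filter fun i => v ∈ T i).card := by
  rw [hitCount, Nat.card_eq_fintype_card, Fintype.card_subtype]

lemma levelCount_eq_card_filter {n k : ℕ} (T : Fin k → Finset (Fin n)) (j : ℕ) :
    levelCount T j = (Finset.univ.filter fun v => hitCount T v = j).card := by
  rw [levelCount, Nat.card_eq_fintype_card, Fintype.card_subtype]

lemma levelCount_le_sum_choose {n k m j : ℕ} (hmj : m ≤ j) (T : Fin k → Finset (Fin n)) :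
    levelCount T j ≤ ∑ v, (hitCount T v).choose m := by
  rw [levelCount_eq_card_filter, Finset.card_filter]
  refine Finset.sum_le_sum fun v _ => ?_
  split_ifs with h
  · rw [h]
    exact Nat.choose_pos hmj
  · exact Nat.zero_le _

lemma sum_sum_choose_hitCount_le {n k : ℕ} (hn : 3 ≤ n) (m : ℕ) :
    ∑ T ∈ triangleTuples n k, ∑ v, ((hitCount T v).choose m : ℝ)
      ≤ n * (k * (3 / n)) ^ m * (n.choose 3 : ℝ) ^ k := by
  rw [Finset.sum_comm]
  calc _ ≤ ∑ _v : Fin n, (k * (3 / n : ℝ)) ^ m * (n.choose 3 : ℝ) ^ k := by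
        refine Finset.sum_le_sum fun v _ => ?_
        have := sum_choose_card_filter_le (k := k) (Finset.univ.powersetCard 3)
          (fun s : Finset (Fin n) => v ∈ s) m (3 / n) (by positivity)
          (card_triangles_containing_vertex_le hn v)
        simp only [hitCount_eq_card_filter]
        simpa [triangleTuples] using this
    _ = _ := by simp [mul_assoc]

/-- The number of pairs of triangles of a tuple that share an edge `uv`, summed over the
ordered pairs `(u, v)`. -/
def edgeOverlap {n k : ℕ} (T : Fin k → Finset (Fin n)) : ℕ :=
  ∑ e ∈ (Finset.univ : Finset (Fin n)).offDiag,
    (Finset.univ.filter fun i => {e.1, e.2} ⊆ T i).card.choose 2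

lemma sum_edgeOverlap_le {n k : ℕ} (hn : 3 ≤ n) :
    ∑ T ∈ triangleTuples n k, (edgeOverlap T : ℝ)
      ≤ n ^ 2 * (k * (6 / (n * (n - 1)))) ^ 2 * (n.choose 3 : ℝ) ^ k := by
  have hn' : (3 : ℝ) ≤ n := by exact_mod_cast hn
  have hpos : (0 : ℝ) ≤ n - 1 := by linarith
  simp only [edgeOverlap, Nat.cast_sum]
  rw [Finset.sum_comm]
  calc _ ≤ ∑ _e ∈ (Finset.univ : Finset (Fin n)).offDiag,
          (k * (6 / (n * (n - 1)) : ℝ)) ^ 2 * (n.choose 3 : ℝ) ^ k := by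
        refine Finset.sum_le_sum fun e he => ?_
        have := sum_choose_card_filter_le (k := k) (Finset.univ.powersetCard 3)
          (fun s : Finset (Fin n) => {e.1, e.2} ⊆ s) 2 (6 / (n * (n - 1))) (by positivity)
          (card_triangles_containing_pair_le hn (Finset.mem_offDiag.1 he).2.2)
        simpa [triangleTuples] using this
    _ ≤ _ := by
        rw [Finset.sum_const, nsmul_eq_mul, mul_assoc ((n : ℝ) ^ 2)]
        gcongr
        have : (Finset.univ : Finset (Fin n)).offDiag.card ≤ n ^ 2 := by
          rw [Finset.offDiag_card]
          simp [sq]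
        exact_mod_cast this

lemma one_le_edgeOverlap {n k : ℕ} {T : Fin k → Finset (Fin n)}
    (hT : ∀ i, (T i).card = 3) (hF : T ∉ F1 n k) : 1 ≤ edgeOverlap T := by
  have h : ∃ i j, i ≠ j ∧ 1 < (T i ∩ T j).card := by
    by_contra! h
    refine hF ⟨hT, fun i j hij => ?_, h⟩
    by_contra hne
    have := h i j hne
    rw [hij, Finset.inter_self, hT j] at this
    omega
  obtain ⟨i, j, hij, h⟩ := h
  obtain ⟨u, hu, v, hv, huv⟩ := Finset.one_lt_card.1 h
  rw [Finset.mem_inter] at hu hv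
  refine le_trans ?_ (Finset.single_le_sum (fun _ _ => Nat.zero_le _)
    ((Finset.mem_offDiag (x := (u, v))).2
      ⟨Finset.mem_univ u, Finset.mem_univ v, huv⟩))
  refine Nat.choose_pos (Nat.succ_le_of_lt (Finset.one_lt_card.2 ⟨i, ?_, j, ?_, hij⟩))
  · simp [Finset.insert_subset_iff, hu.1, hv.1]
  · simp [Finset.insert_subset_iff, hu.2, hv.2]

/-- The expected value of this weight dominates the probability of `ℱ₁ᶜ ∪ ℬ`. -/
lemma one_le_weight {n k dv : ℕ} (hn : 0 < n) (hdv : 0 < dv) {T : Fin k → Finset (Fin n)}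
    (hT : ∀ i, (T i).card = 3) (h : ¬ (T ∈ F1 n k ∧ T ∉ B n dv k)) :
    (1 : ℝ) ≤ edgeOverlap T + ∑ v, ((hitCount T v).choose 4 : ℝ)
      + (∑ v, ((hitCount T v).choose 2 : ℝ)) / ((dv : ℝ) ^ 2 / Real.sqrt n) := by
  have h4 : (0 : ℝ) ≤ ∑ v, ((hitCount T v).choose 4 : ℝ) := by positivity
  have h2 : (0 : ℝ) ≤ (∑ v, ((hitCount T v).choose 2 : ℝ)) / ((dv : ℝ) ^ 2 / Real.sqrt n) := by
    positivity
  have h1 : (0 : ℝ) ≤ edgeOverlap T := by positivity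
  by_cases hF : T ∈ F1 n k
  · have hB : T ∈ B n dv k := by tauto
    rcases hB.2 with ⟨j, hj, hpos⟩ | ⟨j, hj, hle⟩
    · have : (1 : ℝ) ≤ ∑ v, ((hitCount T v).choose 4 : ℝ) := by
        exact_mod_cast hpos.trans_le (levelCount_le_sum_choose hj T)
      linarith
    · have : (levelCount T j : ℝ) ≤ ∑ v, ((hitCount T v).choose 2 : ℝ) := by
        exact_mod_cast levelCount_le_sum_choose (by omega) T
      have : (1 : ℝ) ≤
          (∑ v, ((hitCount T v).choose 2 : ℝ)) / ((dv : ℝ) ^ 2 / Real.sqrt n) := by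
        rw [one_le_div (by positivity)]
        exact hle.trans this
      linarith
  · have : (1 : ℝ) ≤ edgeOverlap T := by exact_mod_cast one_le_edgeOverlap hT hF
    linarith

open Classical in
lemma card_bad_le {n k dv : ℕ} (hn : 3 ≤ n) (hdv : 0 < dv) :
    (((triangleTuples n k).filter fun T => ¬ (T ∈ F1 n k ∧ T ∉ B n dv k)).card : ℝ)
      ≤ (n ^ 2 * (k * (6 / (n * (n - 1)))) ^ 2 + n * (k * (3 / n)) ^ 4
          + n * (k * (3 / n)) ^ 2 / ((dv : ℝ) ^ 2 / Real.sqrt n)) * (n.choose 3 : ℝ) ^ k := by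
  rw [Finset.card_filter]
  push_cast
  calc _ ≤ ∑ T ∈ triangleTuples n k, ((edgeOverlap T : ℝ) + ∑ v, ((hitCount T v).choose 4 : ℝ)
          + (∑ v, ((hitCount T v).choose 2 : ℝ)) / ((dv : ℝ) ^ 2 / Real.sqrt n)) := by
        refine Finset.sum_le_sum fun T hT => ?_
        split_ifs with h
        · positivity
        · exact one_le_weight (by omega) hdv (mem_triangleTuples.1 hT) h
    _ ≤ _ := by
        rw [Finset.sum_add_distrib, Finset.sum_add_distrib, ← Finset.sum_div, add_mul, add_mul,
          div_mul_eq_mul_div]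
        gcongr
        · exact sum_edgeOverlap_le hn
        · exact sum_sum_choose_hitCount_le hn 4
        · exact sum_sum_choose_hitCount_le hn 2

lemma bad_ratio_le {c : ℝ} (hc : 0 < c) {n k dv : ℕ} (hn : 3 ≤ n) (hdv : 0 < dv)
    (hx : (dv : ℝ) / Real.sqrt n ≤ 1) (hk : (k : ℝ) ≤ c * (dv : ℝ) ^ ((3 : ℝ) / 2)) :
    (n : ℝ) ^ 2 * (k * (6 / (n * (n - 1)))) ^ 2 + n * (k * (3 / n)) ^ 4
          + n * (k * (3 / n)) ^ 2 / ((dv : ℝ) ^ 2 / Real.sqrt n)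
      ≤ (153 * c ^ 2 + 81 * c ^ 4) * ((dv : ℝ) / Real.sqrt n) := by
  have hn' : (3 : ℝ) ≤ n := by exact_mod_cast hn
  have hd : (0 : ℝ) < dv := by exact_mod_cast hdv
  have hk2 : (k : ℝ) ^ 2 ≤ c ^ 2 * (dv : ℝ) ^ 3 := by
    calc (k : ℝ) ^ 2 ≤ (c * (dv : ℝ) ^ ((3 : ℝ) / 2)) ^ 2 := by gcongr
      _ = c ^ 2 * (dv : ℝ) ^ 3 := by
        rw [mul_pow, ← Real.rpow_natCast ((dv : ℝ) ^ ((3 : ℝ) / 2)), ← Real.rpow_mul hd.le]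
        norm_num
  obtain ⟨s, hs, hns⟩ : ∃ s : ℝ, s = Real.sqrt n ∧ (n : ℝ) = s ^ 2 :=
    ⟨_, rfl, (Real.sq_sqrt (by linarith)).symm⟩
  have hs1 : 1 ≤ s := by rw [hs]; exact Real.one_le_sqrt.2 (by linarith)
  have hs0 : 0 < s := by linarith
  rw [← hs] at hx ⊢
  have hx0 : 0 ≤ (dv : ℝ) / s := by positivity
  have t1 : (n : ℝ) ^ 2 * (k * (6 / (n * (n - 1)))) ^ 2 ≤ 144 * c ^ 2 * (dv / s) := by
    have h1 : (0 : ℝ) < n - 1 := by linarith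
    calc (n : ℝ) ^ 2 * (k * (6 / (n * (n - 1)))) ^ 2 = 36 * (k : ℝ) ^ 2 / (n - 1) ^ 2 := by
          field_simp
          ring
      _ ≤ 36 * (c ^ 2 * (dv : ℝ) ^ 3) / (n / 2) ^ 2 := by
          gcongr
          linarith
      _ = 144 * c ^ 2 * (dv / s) ^ 3 / s := by rw [hns]; field_simp; ring
      _ ≤ 144 * c ^ 2 * (dv / s) ^ 3 := div_le_self (by positivity) hs1
      _ ≤ _ := by
          gcongr
          exact pow_le_of_le_one hx0 hx (by norm_num)
  have t2 : (n : ℝ) * (k * (3 / n)) ^ 4 ≤ 81 * c ^ 4 * (dv / s) := by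
    calc (n : ℝ) * (k * (3 / n)) ^ 4 = 81 * ((k : ℝ) ^ 2) ^ 2 / n ^ 3 := by
          field_simp
          ring
      _ ≤ 81 * (c ^ 2 * (dv : ℝ) ^ 3) ^ 2 / n ^ 3 := by gcongr
      _ = 81 * c ^ 4 * (dv / s) ^ 6 := by rw [hns]; field_simp
      _ ≤ _ := by
          gcongr
          exact pow_le_of_le_one hx0 hx (by norm_num)
  have t3 : (n : ℝ) * (k * (3 / n)) ^ 2 / ((dv : ℝ) ^ 2 / s) ≤ 9 * c ^ 2 * (dv / s) := by
    calc (n : ℝ) * (k * (3 / n)) ^ 2 / ((dv : ℝ) ^ 2 / s)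
        = 9 * (k : ℝ) ^ 2 / n / ((dv : ℝ) ^ 2 / s) := by
          field_simp
          ring
      _ ≤ 9 * (c ^ 2 * (dv : ℝ) ^ 3) / n / ((dv : ℝ) ^ 2 / s) := by gcongr
      _ = _ := by rw [hns]; field_simp
  linarith

/-- Counting estimates: uniformly for `k ≤ c·d^{3/2}`,
`|ℱ₁(k)\ℬ(k)| ∼ ((n)₃/6)^k` and `|ℱ₁(k)∩ℬ(k)| = o(((n)₃/6)^k)`. -/
theorem stmt17 (c : ℝ) (hc : 0 < c) (d : ℕ → ℕ) (hd : ∀ n, 0 < d n)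
    (hinf : Tendsto (fun n => (d n : ℝ)) atTop atTop)
    (hsmall : Tendsto (fun n => (d n : ℝ) / Real.sqrt n) atTop (nhds 0)) :
    ∀ ε : ℝ, 0 < ε → ∃ N : ℕ, ∀ n ≥ N, ∀ k : ℕ, 1 ≤ k →
      (k : ℝ) ≤ c * (d n : ℝ) ^ ((3 : ℝ) / 2) →
      |(Nat.card {T : Fin k → Finset (Fin n) // T ∈ F1 n k ∧ T ∉ B n (d n) k} : ℝ) /
          ((n.descFactorial 3 : ℝ) / 6) ^ k - 1| ≤ ε ∧
      (Nat.card {T : Fin k → Finset (Fin n) // T ∈ F1 n k ∧ T ∈ B n (d n) k} : ℝ) /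
          ((n.descFactorial 3 : ℝ) / 6) ^ k ≤ ε := by
  classical
  intro ε hε
  have hC : 0 < 153 * c ^ 2 + 81 * c ^ 4 := by positivity
  have hδ : 0 < min 1 (ε / (153 * c ^ 2 + 81 * c ^ 4)) := lt_min one_pos (div_pos hε hC)
  obtain ⟨N, hN⟩ := eventually_atTop.1 (hsmall.eventually (gt_mem_nhds hδ))
  refine ⟨max N 3, fun n hn k _ hk => ?_⟩
  have hn3 : 3 ≤ n := (le_max_right _ _).trans hn
  have hx := (hN n ((le_max_left _ _).trans hn)).le
  have hM : (n.descFactorial 3 : ℝ) / 6 = n.choose 3 := by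
    rw [Nat.descFactorial_eq_factorial_mul_choose]
    simp [Nat.factorial]
  have hMpos : (0 : ℝ) < (n.choose 3 : ℝ) ^ k :=
    pow_pos (by exact_mod_cast Nat.choose_pos hn3) k
  have hbad : (((triangleTuples n k).filter
      fun T => ¬ (T ∈ F1 n k ∧ T ∉ B n (d n) k)).card : ℝ) ≤ ε * (n.choose 3 : ℝ) ^ k := by
    refine (card_bad_le hn3 (hd n)).trans ?_
    gcongr
    refine (bad_ratio_le hc hn3 (hd n) (hx.trans (min_le_left _ _)) hk).trans ?_
    rw [mul_comm, ← le_div_iff₀ hC]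
    exact hx.trans (min_le_right _ _)
  have hgood : Nat.card {T : Fin k → Finset (Fin n) // T ∈ F1 n k ∧ T ∉ B n (d n) k}
      = ((triangleTuples n k).filter fun T => T ∈ F1 n k ∧ T ∉ B n (d n) k).card := by
    rw [Nat.card_eq_fintype_card, Fintype.card_subtype]
    congr 1
    ext T
    simp only [Finset.mem_filter, Finset.mem_univ, true_and, mem_triangleTuples]
    exact ⟨fun h => ⟨h.1.1, h⟩, fun h => h.2⟩
  have hsum := Finset.card_filter_add_card_filter_not (s := triangleTuples n k)
    (fun T => T ∈ F1 n k ∧ T ∉ B n (d n) k)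
  rw [card_triangleTuples, ← hgood] at hsum
  have hsum' := congrArg (Nat.cast : ℕ → ℝ) hsum
  push_cast at hsum'
  rw [hM]
  constructor
  · rw [div_sub_one hMpos.ne', abs_div, abs_of_pos hMpos, div_le_iff₀ hMpos, abs_le]
    constructor
    · linarith
    · have : (0 : ℝ) ≤ (((triangleTuples n k).filter
        fun T => ¬ (T ∈ F1 n k ∧ T ∉ B n (d n) k)).card : ℝ) := Nat.cast_nonneg _
      have := mul_pos hε hMpos
      linarith
  · rw [div_le_iff₀ hMpos]
    refine le_trans ?_ hbad
    rw [Nat.card_eq_fintype_card, Fintype.card_subtype]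
    refine Nat.cast_le.2 (Finset.card_le_card fun T hT => ?_)
    simp only [Finset.mem_filter, Finset.mem_univ, true_and, mem_triangleTuples] at hT ⊢
    exact ⟨hT.1.1, fun h => h.2 hT.2⟩
end
end
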